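/- Burn-in to the fixed point (random walk lemma): let p* solve φ(p)=p with φ'(p*)<1, and let p̄ be the least solution of φ(p)=p greater than p* if one exists and 1 otherwise. For every μ > 0 there exist δ, c, α > 0 and N such that for all n ≥ N: for any initial graph X(0) on [n] with p* + μ ≤ r̄(X(0)) ≤ p̄ − μ, after T = ⌈c·n²⌉ steps of the Glauber dynamics, P( r̄(X(T)) ≤ r̄(X(0)) − δ ) ≥ 1 − e^{−αn}. -/

import Mathlib

open Finset

open scoped Classical

noncomputable section

/-- The set of edges of the complete graph `K_n` on vertex set `[n] = Fin n`:
unordered pairs of distinct vertices. -/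
abbrev EdgeK (n : ℕ) : Type := {e : Sym2 (Fin n) // ¬ e.IsDiag}

/-- A graph on `[n]`, identified with an element `X ∈ {0,1}^{E(K_n)}`. -/
abbrev Config (n : ℕ) : Type := EdgeK n → Bool

/-- The image of an edge under an injection of vertex sets. -/
def mapEdge {m n : ℕ} (v : Fin m ↪ Fin n) (a : EdgeK m) : EdgeK n :=
  ⟨a.1.map v, fun h => a.2 ((Sym2.isDiag_map v.injective).mp h)⟩

/-- The complete graph `K_n` as a configuration. -/
def fullConfig (n : ℕ) : Config n := fun _ => true

/-- `X ∪ {e}`. -/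
def addEdge {n : ℕ} (X : Config n) (e : EdgeK n) : Config n :=
  fun f => if f = e then true else X f

/-- `X_{e+}` (for `b = true`), resp. `X_{e-}` (for `b = false`). -/
def setEdge {n : ℕ} (X : Config n) (e : EdgeK n) (b : Bool) : Config n :=
  fun f => if f = e then b else X f

/-- `N_G(X)`: the number of tuples of `m` distinct vertices of `[n]` such that every
edge of the pattern graph `G` (a graph on `m` labelled vertices) is mapped to an edge of `X`. -/
def copyCount {n m : ℕ} (X : Config n) (G : Finset (EdgeK m)) : ℕ :=
  (univ.filter fun v : Fin m ↪ Fin n => ∀ a ∈ G, X (mapEdge v a) = true).card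

/-- `N_G(X, e)`: the number of such tuples for `X ∪ {e}` which moreover use the edge `e`. -/
def rootedCount {n m : ℕ} (X : Config n) (G : Finset (EdgeK m)) (e : EdgeK n) : ℕ :=
  (univ.filter fun v : Fin m ↪ Fin n =>
    (∃ a ∈ G, mapEdge v a = e) ∧ ∀ a ∈ G, addEdge X e (mapEdge v a) = true).card

/-- `N_G(X, e, e')`: the number of such tuples for `X ∪ {e, e'}` which use both `e` and `e'`. -/
def rooted2Count {n m : ℕ} (X : Config n) (G : Finset (EdgeK m)) (e e' : EdgeK n) : ℕ :=
  (univ.filter fun v : Fin m ↪ Fin n =>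
    (∃ a ∈ G, mapEdge v a = e) ∧ (∃ a ∈ G, mapEdge v a = e') ∧
      ∀ a ∈ G, addEdge (addEdge X e) e' (mapEdge v a) = true).card

/-- The number of edges of the graph `X`. -/
def edgeCount {n : ℕ} (X : Config n) : ℕ := (univ.filter fun e => X e = true).card

/-- Hamming distance between two graphs: the number of edges of disagreement. -/
def hamDist {n : ℕ} (X Y : Config n) : ℕ := (univ.filter fun f => X f ≠ Y f).card

/-- The Hamiltonian `H(X) = ∑ i, β i * N_{G_i}(X) / n^(|V_i| - 2)`. -/
def ergmH {s : ℕ} (V : Fin s → ℕ) (Pt : ∀ i, Finset (EdgeK (V i))) (β : Fin s → ℝ)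
    (n : ℕ) (X : Config n) : ℝ :=
  ∑ i, β i * (copyCount X (Pt i) : ℝ) / (n : ℝ) ^ (V i - 2)

/-- The Gibbs measure `p_n(X) = exp(H(X)) / Z_n`. -/
def gibbs {s : ℕ} (V : Fin s → ℕ) (Pt : ∀ i, Finset (EdgeK (V i))) (β : Fin s → ℝ)
    (n : ℕ) (X : Config n) : ℝ :=
  Real.exp (ergmH V Pt β n X) / ∑ Y : Config n, Real.exp (ergmH V Pt β n Y)

/-- `∂_e H(X) = H(X_{e+}) - H(X_{e-})`. -/
def dH {s : ℕ} (V : Fin s → ℕ) (Pt : ∀ i, Finset (EdgeK (V i))) (β : Fin s → ℝ)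
    (n : ℕ) (X : Config n) (e : EdgeK n) : ℝ :=
  ergmH V Pt β n (setEdge X e true) - ergmH V Pt β n (setEdge X e false)

/-- The transition kernel of the Glauber dynamics: a uniformly random edge `e` of `K_n` is
chosen and set present with probability `exp(∂_e H(X)) /(1 + exp(∂_e H(X)))`, absent
otherwise. -/
def glauber {s : ℕ} (V : Fin s → ℕ) (Pt : ∀ i, Finset (EdgeK (V i))) (β : Fin s → ℝ)
    (n : ℕ) (X Y : Config n) : ℝ :=
  ((n.choose 2 : ℝ))⁻¹ * ∑ e : EdgeK n,
    ((if Y = setEdge X e true then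
        Real.exp (dH V Pt β n X e) / (1 + Real.exp (dH V Pt β n X e)) else 0)
      + (if Y = setEdge X e false then 1 / (1 + Real.exp (dH V Pt β n X e)) else 0))

/-- The `t`-step distribution of the Markov chain with one-step kernel `K`,
started from a given state. -/
def kernelStep {n : ℕ} (K : Config n → Config n → ℝ) : ℕ → Config n → Config n → ℝ
  | 0 => fun x y => if y = x then 1 else 0
  | (t+1) => fun x y => ∑ z, kernelStep K t x z * K z y

/-- Total variation distance between two (signed) distributions on `Config n`. -/
def tvDist {n : ℕ} (μ ν : Config n → ℝ) : ℝ := (∑ Y, |μ Y - ν Y|) / 2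

/-- `mixes K π t` says that after `t` steps the chain with kernel `K` is within total
variation distance `e⁻¹` of `π` from every starting state. -/
def mixes {n : ℕ} (K : Config n → Config n → ℝ) (π : Config n → ℝ) (t : ℕ) : Prop :=
  ∀ x, tvDist (kernelStep K t x) π ≤ Real.exp (-1)

/-- The mixing time: the least `t` such that from every starting state the chain is within
total variation distance `e⁻¹` of `π`. -/
def mixingTime {n : ℕ} (K : Config n → Config n → ℝ) (π : Config n → ℝ) : ℕ :=
  sInf {t | mixes K π t}

/-- `Ψ(p) = ∑ i, 2 β_i |E_i| p^(|E_i| - 1)`. -/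
def PsiF {s : ℕ} {V : Fin s → ℕ} (Pt : ∀ i, Finset (EdgeK (V i))) (β : Fin s → ℝ)
    (p : ℝ) : ℝ :=
  ∑ i, 2 * β i * ((Pt i).card : ℝ) * p ^ ((Pt i).card - 1)

/-- `φ(p) = exp(Ψ(p)) / (1 + exp(Ψ(p)))`. -/
def phiF {s : ℕ} {V : Fin s → ℕ} (Pt : ∀ i, Finset (EdgeK (V i))) (β : Fin s → ℝ)
    (p : ℝ) : ℝ :=
  Real.exp (PsiF Pt β p) / (1 + Real.exp (PsiF Pt β p))

/-- High temperature phase: `φ(p) = p` has a unique solution `p*` (in `[0,1]`), which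
moreover satisfies `φ'(p*) < 1`. -/
def HighTemp {s : ℕ} {V : Fin s → ℕ} (Pt : ∀ i, Finset (EdgeK (V i))) (β : Fin s → ℝ)
    (pstar : ℝ) : Prop :=
  pstar ∈ Set.Icc (0:ℝ) 1 ∧ phiF Pt β pstar = pstar ∧
    (∀ q ∈ Set.Icc (0:ℝ) 1, phiF Pt β q = q → q = pstar) ∧
    deriv (phiF Pt β) pstar < 1

/-- Low temperature phase: `φ(p) = p` has at least two solutions `p` with `φ'(p) < 1`. -/
def LowTemp {s : ℕ} {V : Fin s → ℕ} (Pt : ∀ i, Finset (EdgeK (V i))) (β : Fin s → ℝ) : Prop :=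
  ∃ p₁ p₂ : ℝ, p₁ ∈ Set.Icc (0:ℝ) 1 ∧ p₂ ∈ Set.Icc (0:ℝ) 1 ∧ p₁ ≠ p₂ ∧
    phiF Pt β p₁ = p₁ ∧ phiF Pt β p₂ = p₂ ∧
    deriv (phiF Pt β) p₁ < 1 ∧ deriv (phiF Pt β) p₂ < 1

/-- `r_G(X, e) = (N_G(X,e) / (2 |E(G)| n^(|V(G)|-2)))^(1/(|E(G)|-1))`. -/
def rG {n m : ℕ} (X : Config n) (G : Finset (EdgeK m)) (e : EdgeK n) : ℝ :=
  ((rootedCount X G e : ℝ) / (2 * (G.card : ℝ) * (n : ℝ) ^ (m - 2))) ^ (((G.card : ℝ) - 1)⁻¹)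

/-- The set of values `r_G(X,e)` over all edges `e` of `K_n` and all graphs `G` on at
most `L` vertices with at least two edges. -/
def rSet (L n : ℕ) (X : Config n) : Set ℝ :=
  {r | ∃ m, m ≤ L ∧ ∃ G : Finset (EdgeK m), 2 ≤ G.card ∧ ∃ e : EdgeK n, r = rG X G e}

/-- `r̄(X)`: the maximum of `r_G(X,e)` over all edges `e` of `K_n` and all graphs `G` on
at most `L` vertices with at least two edges. -/
def rbar (L n : ℕ) (X : Config n) : ℝ := sSup (rSet L n X)

/-- `r_min(X)`: the corresponding minimum. -/
def rmin (L n : ℕ) (X : Config n) : ℝ := sInf (rSet L n X)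

/-- The cycle `C_l` on `l` labelled vertices, as a pattern graph. -/
def cyclePattern (l : ℕ) [NeZero l] : Finset (EdgeK l) :=
  univ.filter fun e => ∃ i : Fin l, e.1 = s(i, i + 1)

/-- The probability of a length-`T` trajectory `w` for the chain with kernel `K`
started at `x`. -/
def trajProb {n T : ℕ} (K : Config n → Config n → ℝ) (x : Config n)
    (w : Fin (T+1) → Config n) : ℝ :=
  (if w 0 = x then 1 else 0) * ∏ i : Fin T, K (w i.castSucc) (w i.succ)

/-- Two edges of `K_n` share a vertex. -/
def sharesVertex {n : ℕ} (e e' : EdgeK n) : Prop := ∃ v, v ∈ e.1 ∧ v ∈ e'.1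

end

/-! ### Counting embeddings -/

lemma card_emb_le {m n : ℕ} (S : Finset (Fin m)) (A : Fin m → Finset (Fin n)) (c : ℕ)
    (hA : ∀ k ∈ S, (A k).card ≤ c) :
    (univ.filter fun v : Fin m ↪ Fin n => ∀ k ∈ S, v k ∈ A k).card
      ≤ c ^ S.card * n ^ (m - S.card) := by
  have h1 : (univ.filter fun v : Fin m ↪ Fin n => ∀ k ∈ S, v k ∈ A k).card
      ≤ (Fintype.piFinset (fun k => if k ∈ S then A k else (univ : Finset (Fin n)))).card := by
    refine Finset.card_le_card_of_injOn (fun v : Fin m ↪ Fin n => (v : Fin m → Fin n)) ?_ ?_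
    · intro v hv
      have hv' := (Finset.mem_filter.mp (Finset.mem_coe.mp hv)).2
      simp only [Finset.mem_coe, Fintype.mem_piFinset]
      intro k
      by_cases hk : k ∈ S
      · simpa [hk] using hv' k hk
      · simp [hk]
    · intro v _ w _ h
      exact DFunLike.coe_injective h
  refine h1.trans ?_
  rw [Fintype.card_piFinset]
  calc ∏ k, (if k ∈ S then A k else (univ : Finset (Fin n))).card
      ≤ ∏ k, (if k ∈ S then c else n) := by
        apply Finset.prod_le_prod'
        intro k _
        by_cases hk : k ∈ S
        · simpa [hk] using hA k hk
        · simp [hk]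
    _ = c ^ S.card * n ^ (m - S.card) := by
        rw [Finset.prod_ite, Finset.prod_const, Finset.prod_const]
        congr 2
        · simp
        · have : (univ.filter fun k => k ∉ S) = Sᶜ := by ext; simp
          rw [this, Finset.card_compl, Fintype.card_fin]

lemma mapEdge_injective {m n : ℕ} (v : Fin m ↪ Fin n) : Function.Injective (mapEdge v) := by
  intro a b h
  apply Subtype.ext
  have := congrArg Subtype.val h
  exact Sym2.map.injective v.injective this

lemma edge_cases {m : ℕ} (a : EdgeK m) : ∃ i j : Fin m, i ≠ j ∧ a.1 = s(i, j) := by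
  obtain ⟨a, ha⟩ := a
  induction a with
  | _ i j => exact ⟨i, j, by simpa using ha, rfl⟩

lemma card_root_le {m n : ℕ} (a : EdgeK m) (e : EdgeK n) :
    (univ.filter fun v : Fin m ↪ Fin n => mapEdge v a = e).card ≤ 2 * n ^ (m - 2) := by
  obtain ⟨i, j, hij, ha⟩ := edge_cases a
  obtain ⟨x, y, hxy, he⟩ := edge_cases e
  have key : ∀ x y : Fin n, (univ.filter fun v : Fin m ↪ Fin n => v i = x ∧ v j = y).card
      ≤ n ^ (m - 2) := by
    intro x y
    have := card_emb_le ({i, j} : Finset (Fin m))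
      (fun k => if k = i then ({x} : Finset (Fin n)) else {y}) 1 (by
        intro k _; by_cases hk : k = i <;> simp [hk])
    rw [Finset.card_pair hij] at this
    simpa [hij.symm] using this
  calc _ ≤ ((univ.filter fun v : Fin m ↪ Fin n => v i = x ∧ v j = y) ∪
        (univ.filter fun v : Fin m ↪ Fin n => v i = y ∧ v j = x)).card := by
        apply Finset.card_le_card
        intro v hv
        have hv' := congrArg Subtype.val (Finset.mem_filter.mp hv).2
        simp only [mapEdge, ha, he, Sym2.map_mk, Sym2.eq_iff] at hv'
        simpa using hv'
    _ ≤ _ := (Finset.card_union_le _ _).trans (by have := key x y; have := key y x; omega)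

lemma card_root2_le {m n : ℕ} (a b : EdgeK m) (hab : a ≠ b) (e f : EdgeK n) :
    (univ.filter fun v : Fin m ↪ Fin n => mapEdge v a = e ∧ mapEdge v b = f).card
      ≤ 8 * n ^ (m - 3) := by
  obtain ⟨i, j, hij, ha⟩ := edge_cases a
  obtain ⟨p, q, hpq, hb⟩ := edge_cases b
  obtain ⟨l, hl, hli, hlj⟩ : ∃ l, l ∈ b.1 ∧ l ≠ i ∧ l ≠ j := by
    by_contra hcon
    push Not at hcon
    have h1 := hcon p (by rw [hb]; simp)
    have h2 := hcon q (by rw [hb]; simp)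
    apply hab
    apply Subtype.ext
    rw [ha, hb, Sym2.eq_iff]
    by_cases hp : p = i
    · left
      refine ⟨hp.symm, ?_⟩
      have : q ≠ i := fun h => hpq (hp.trans h.symm)
      exact (h2 this).symm
    · right
      have hpj := h1 hp
      refine ⟨?_, hpj.symm⟩
      by_contra hqi
      exact hpq (hpj.trans (h2 (fun h => hqi h.symm)).symm)
  have := card_emb_le ({l, i, j} : Finset (Fin m))
      (fun k => if k = l then f.1.toFinset else e.1.toFinset) 2 (by
        intro k _
        by_cases hk : k = l
        · simp only [hk, if_true]
          exact (Sym2.card_toFinset_of_not_isDiag _ f.2).le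
        · simp only [hk, if_false]
          exact (Sym2.card_toFinset_of_not_isDiag _ e.2).le)
  have hc : ({l, i, j} : Finset (Fin m)).card = 3 := by
    rw [Finset.card_insert_of_notMem (by simp [hli, hlj]), Finset.card_pair hij]
  rw [hc] at this
  refine (Finset.card_le_card ?_).trans this
  intro v hv
  obtain ⟨h1, h2⟩ := (Finset.mem_filter.mp hv).2
  have h1' := congrArg Subtype.val h1
  have h2' := congrArg Subtype.val h2
  simp only [mapEdge] at h1' h2'
  simp only [Finset.mem_filter, Finset.mem_univ, true_and, Finset.mem_insert,
    Finset.mem_singleton]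
  rintro k (rfl | rfl | rfl)
  · simp only [if_true, Sym2.mem_toFinset, ← h2']
    exact Sym2.mem_map.mpr ⟨_, hl, rfl⟩
  · simp only [hli.symm, if_false, Sym2.mem_toFinset, ← h1']
    exact Sym2.mem_map.mpr ⟨_, by rw [ha]; simp, rfl⟩
  · simp only [hlj.symm, if_false, Sym2.mem_toFinset, ← h1']
    exact Sym2.mem_map.mpr ⟨_, by rw [ha]; simp, rfl⟩

lemma card_edgeK (n : ℕ) : Fintype.card (EdgeK n) = n.choose 2 := by
  have := Sym2.card_subtype_not_diag (α := Fin n)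
  rw [Fintype.card_fin] at this
  rw [← this]

/-- The embeddings sending some edge of `G` to `e`. -/
noncomputable def rootSet {n m : ℕ} (G : Finset (EdgeK m)) (e : EdgeK n) : Finset (Fin m ↪ Fin n) :=
  univ.filter fun v => ∃ a ∈ G, mapEdge v a = e

lemma card_rootSet_le {n m : ℕ} (G : Finset (EdgeK m)) (e : EdgeK n) :
    (rootSet G e).card ≤ G.card * (2 * n ^ (m - 2)) := by
  have : rootSet G e ⊆ G.biUnion fun a => univ.filter fun v : Fin m ↪ Fin n => mapEdge v a = e := by
    intro v hv
    obtain ⟨a, ha, h⟩ := (Finset.mem_filter.mp hv).2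
    simp only [Finset.mem_biUnion, Finset.mem_filter, Finset.mem_univ, true_and]
    exact ⟨a, ha, h⟩
  exact (Finset.card_le_card this).trans (Finset.card_biUnion_le_card_mul _ _ _
    fun a _ => card_root_le a e)

lemma rootedCount_le {n m : ℕ} (X : Config n) (G : Finset (EdgeK m)) (e : EdgeK n) :
    rootedCount X G e ≤ G.card * (2 * n ^ (m - 2)) := by
  refine (Finset.card_le_card ?_).trans (card_rootSet_le G e)
  intro v hv
  have := (Finset.mem_filter.mp hv).2
  exact Finset.mem_filter.mpr ⟨Finset.mem_univ _, this.1⟩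

lemma rootedCount_single {n m : ℕ} (hm : m = 2) (X : Config n) (G : Finset (EdgeK m))
    (hG : G.card = 1) (e : EdgeK n) : rootedCount X G e = 2 := by
  subst hm
  obtain ⟨a, rfl⟩ := Finset.card_eq_one.mp hG
  apply le_antisymm
  · have := rootedCount_le X {a} e
    simpa using this
  · obtain ⟨x, y, hxy, he⟩ := edge_cases e
    obtain ⟨i, j, hij, ha⟩ := edge_cases a
    have hmk : ∀ x y : Fin n, x ≠ y → ∃ v : Fin 2 ↪ Fin n, v i = x ∧ v j = y := by
      intro x y hxy
      refine ⟨⟨fun k => if k = i then x else y, ?_⟩, ?_, ?_⟩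
      rotate_left
      · change (if i = i then x else y) = x; simp
      · change (if j = i then x else y) = y; simp [hij.symm]
      intro k l h
      by_cases hk : k = i <;> by_cases hl : l = i
      · rw [hk, hl]
      · simp [hk, hl, hxy] at h
      · simp [hk, hl, hxy.symm] at h
      · omega
    obtain ⟨v, hv1, hv2⟩ := hmk x y hxy
    obtain ⟨w, hw1, hw2⟩ := hmk y x hxy.symm
    have hvw : v ≠ w := by
      intro h; apply hxy; rw [← hv1, h, hw1]
    refine (Finset.card_pair hvw).ge.trans (Finset.card_le_card ?_)
    have hv : mapEdge v a = e := by
      apply Subtype.ext; simp [mapEdge, ha, he, hv1, hv2]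
    have hw : mapEdge w a = e := by
      apply Subtype.ext; simp [mapEdge, ha, he, hw1, hw2, Sym2.eq_swap]
    intro z hz
    simp only [Finset.mem_insert, Finset.mem_singleton] at hz
    rcases hz with rfl | rfl <;> simp [addEdge, hv, hw]

/-! ### The one step drift -/

lemma copyCount_diff {n m : ℕ} (X : Config n) (G : Finset (EdgeK m)) (e : EdgeK n) :
    copyCount (setEdge X e true) G = rootedCount X G e + copyCount (setEdge X e false) G := by
  unfold copyCount rootedCount
  rw [← Finset.card_union_of_disjoint]
  · congr 1
    ext v
    simp only [Finset.mem_union, Finset.mem_filter, Finset.mem_univ, true_and]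
    simp only [setEdge, addEdge]
    constructor
    · intro h
      by_cases hr : ∃ a ∈ G, mapEdge v a = e
      · exact Or.inl ⟨hr, h⟩
      · right
        intro a ha
        have hne : mapEdge v a ≠ e := fun h' => hr ⟨a, ha, h'⟩
        simpa [hne] using h a ha
    · rintro (h | h)
      · exact h.2
      · intro a ha
        have := h a ha
        by_cases hne : mapEdge v a = e
        · simp [hne]
        · simpa [hne] using this
  · rw [Finset.disjoint_left]
    intro v h1 h2
    obtain ⟨⟨a, ha, hae⟩, -⟩ := (Finset.mem_filter.mp h1).2
    have := (Finset.mem_filter.mp h2).2 a ha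
    simp [setEdge, hae] at this

/-- All rooted counts are bounded as if `r̄ ≤ R`. -/
def goodCfg (L n : ℕ) (R : ℝ) (X : Config n) : Prop :=
  ∀ m ≤ L, ∀ G : Finset (EdgeK m), 2 ≤ G.card → ∀ e : EdgeK n,
    (rootedCount X G e : ℝ) ≤ 2 * (G.card : ℝ) * (n : ℝ) ^ (m - 2) * R ^ (G.card - 1)

lemma goodCfg.le {L n : ℕ} {R : ℝ} {X : Config n} (h : goodCfg L n R X) {m : ℕ} (hm : m ≤ L)
    (G : Finset (EdgeK m)) (hG : 1 ≤ G.card) (e : EdgeK n) :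
    (rootedCount X G e : ℝ) ≤ 2 * (G.card : ℝ) * (n : ℝ) ^ (m - 2) * R ^ (G.card - 1) := by
  rcases Nat.lt_or_ge 1 G.card with h2 | h2
  · exact h m hm G h2 e
  · have h1 : G.card = 1 := le_antisymm h2 hG
    have := rootedCount_le X G e
    rw [h1] at this ⊢
    have h' : (rootedCount X G e : ℝ) ≤ ((1 * (2 * n ^ (m - 2)) : ℕ) : ℝ) := by exact_mod_cast this
    push_cast at h'
    simpa using h'

lemma rG_le_of {n m : ℕ} (X : Config n) (G : Finset (EdgeK m)) (e : EdgeK n) (R : ℝ) (hR : 0 ≤ R)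
    (hG : 2 ≤ G.card)
    (h : (rootedCount X G e : ℝ) ≤ 2 * (G.card : ℝ) * (n : ℝ) ^ (m - 2) * R ^ (G.card - 1)) :
    rG X G e ≤ R := by
  unfold rG
  have hk : ((G.card : ℝ) - 1) = ((G.card - 1 : ℕ) : ℝ) := by
    rw [Nat.cast_sub (by omega)]; simp
  have h1 : (rootedCount X G e : ℝ) / (2 * (G.card : ℝ) * (n : ℝ) ^ (m - 2)) ≤ R ^ (G.card - 1) := by
    apply div_le_of_le_mul₀ (by positivity) (by positivity)
    linarith
  calc _ ≤ (R ^ (G.card - 1)) ^ (((G.card : ℝ) - 1)⁻¹) := by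
        apply Real.rpow_le_rpow (by positivity) h1
        rw [hk]; positivity
    _ = R := by
        rw [hk]
        exact Real.pow_rpow_inv_natCast hR (by omega)

lemma rbar_le_of_good {L n : ℕ} {R : ℝ} (hR : 0 ≤ R) {X : Config n} (h : goodCfg L n R X) :
    rbar L n X ≤ R := by
  apply Real.sSup_le _ hR
  rintro r ⟨m, hm, G, hG, e, rfl⟩
  exact rG_le_of X G e R hR hG (h m hm G hG e)

lemma good_of_rbar_le {L n : ℕ} {R : ℝ} (hn : 0 < n) {X : Config n} (h : rbar L n X ≤ R) :
    goodCfg L n R X := by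
  intro m hm G hG e
  have hbdd : BddAbove (rSet L n X) := by
    refine ⟨1, ?_⟩
    rintro r ⟨m, hm, G, hG, e, rfl⟩
    apply rG_le_of X G e 1 zero_le_one hG
    have := rootedCount_le X G e
    have h' : (rootedCount X G e : ℝ) ≤ ((G.card * (2 * n ^ (m - 2)) : ℕ) : ℝ) := by
      exact_mod_cast this
    push_cast at h'
    rw [one_pow]
    linarith
  have h1 : rG X G e ≤ R := (le_csSup hbdd ⟨m, hm, G, hG, e, rfl⟩).trans h
  have hk : ((G.card : ℝ) - 1) = ((G.card - 1 : ℕ) : ℝ) := by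
    rw [Nat.cast_sub (by omega)]; simp
  have hD : 0 < 2 * (G.card : ℝ) * (n : ℝ) ^ (m - 2) := by
    have : 0 < (G.card : ℝ) := by exact_mod_cast (by omega : 0 < G.card)
    have : 0 < (n : ℝ) := by exact_mod_cast hn
    positivity
  have h0 : 0 ≤ rG X G e := by unfold rG; positivity
  have h2 : rG X G e ^ (G.card - 1) ≤ R ^ (G.card - 1) := pow_le_pow_left₀ h0 h1 _
  have h3 : rG X G e ^ (G.card - 1)
      = (rootedCount X G e : ℝ) / (2 * (G.card : ℝ) * (n : ℝ) ^ (m - 2)) := by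
    unfold rG
    rw [hk]
    exact Real.rpow_inv_natCast_pow (by positivity) (by omega)
  rw [h3, div_le_iff₀ hD] at h2
  linarith

lemma dH_eq {s : ℕ} (V : Fin s → ℕ) (Pt : ∀ i, Finset (EdgeK (V i))) (β : Fin s → ℝ)
    (n : ℕ) (X : Config n) (e : EdgeK n) :
    dH V Pt β n X e = ∑ i, β i * (rootedCount X (Pt i) e : ℝ) / (n : ℝ) ^ (V i - 2) := by
  unfold dH ergmH
  rw [← Finset.sum_sub_distrib]
  apply Finset.sum_congr rfl
  intro i _
  rw [copyCount_diff]
  push_cast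
  ring

lemma dH_le {L s : ℕ} (hs : 0 < s)
    (V : Fin s → ℕ) (Pt : ∀ i, Finset (EdgeK (V i))) (β : Fin s → ℝ)
    (hVL : ∀ i, V i ≤ L)
    (hG1V : V ⟨0, hs⟩ = 2) (hG1E : (Pt ⟨0, hs⟩).card = 1)
    (hβ : ∀ i : Fin s, 0 < (i : ℕ) → 0 < β i)
    {n : ℕ} (hn : 0 < n) (X : Config n) (e : EdgeK n) (R : ℝ) (h : goodCfg L n R X) :
    dH V Pt β n X e ≤ PsiF Pt β R := by
  rw [dH_eq]
  unfold PsiF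
  apply Finset.sum_le_sum
  intro i _
  have hn' : 0 < (n : ℝ) ^ (V i - 2) := by
    have : 0 < (n : ℝ) := by exact_mod_cast hn
    positivity
  by_cases hi : i = ⟨0, hs⟩
  · subst hi
    rw [rootedCount_single hG1V X _ hG1E, hG1E, hG1V]
    simp
    linarith
  · have hi0 : 0 < (i : ℕ) := by
      rcases Nat.eq_zero_or_pos (i : ℕ) with h0 | h0
      · exact absurd (Fin.ext h0) hi
      · exact h0
    have hb := hβ i hi0
    rw [div_le_iff₀ hn']
    rcases Nat.eq_zero_or_pos (Pt i).card with h0 | h0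
    · have := rootedCount_le X (Pt i) e
      rw [h0] at this ⊢
      have h00 : rootedCount X (Pt i) e = 0 := by omega
      rw [h00]; simp
    · have := h.le (hVL i) (Pt i) h0 e
      calc β i * (rootedCount X (Pt i) e : ℝ)
          ≤ β i * (2 * ((Pt i).card : ℝ) * (n : ℝ) ^ (V i - 2) * R ^ ((Pt i).card - 1)) :=
            mul_le_mul_of_nonneg_left this hb.le
        _ = _ := by ring

/-- The logistic function. -/
noncomputable def sig (t : ℝ) : ℝ := Real.exp t / (1 + Real.exp t)

lemma sig_mono : Monotone sig := by
  intro a b h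
  unfold sig
  have h1 := Real.exp_pos a
  have h2 := Real.exp_pos b
  have h3 := Real.exp_le_exp.mpr h
  rw [div_le_div_iff₀ (by positivity) (by positivity)]
  nlinarith

lemma sig_nonneg (t : ℝ) : 0 ≤ sig t := by unfold sig; positivity

lemma sig_lt_one (t : ℝ) : sig t < 1 := by
  unfold sig
  have h1 := Real.exp_pos t
  rw [div_lt_one (by positivity)]
  linarith

lemma one_sub_sig (t : ℝ) : 1 / (1 + Real.exp t) = 1 - sig t := by
  unfold sig
  have h1 := Real.exp_pos t
  field_simp
  ring

lemma glauber_sum {s : ℕ} (V : Fin s → ℕ) (Pt : ∀ i, Finset (EdgeK (V i))) (β : Fin s → ℝ)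
    (n : ℕ) (X : Config n) (g : Config n → ℝ) :
    ∑ Y, glauber V Pt β n X Y * g Y = ((n.choose 2 : ℝ))⁻¹ * ∑ e : EdgeK n,
      (sig (dH V Pt β n X e) * g (setEdge X e true)
        + (1 - sig (dH V Pt β n X e)) * g (setEdge X e false)) := by
  unfold glauber
  simp_rw [mul_assoc]
  rw [← Finset.mul_sum]
  congr 1
  simp_rw [Finset.sum_mul]
  rw [Finset.sum_comm]
  apply Finset.sum_congr rfl
  intro e _
  simp_rw [add_mul, ite_mul, zero_mul]
  rw [Finset.sum_add_distrib, Finset.sum_ite_eq', Finset.sum_ite_eq', one_sub_sig]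
  simp [sig]

lemma glauber_nonneg {s : ℕ} (V : Fin s → ℕ) (Pt : ∀ i, Finset (EdgeK (V i))) (β : Fin s → ℝ)
    (n : ℕ) (X Y : Config n) : 0 ≤ glauber V Pt β n X Y := by
  unfold glauber
  apply mul_nonneg (by positivity)
  apply Finset.sum_nonneg
  intro e _
  apply add_nonneg <;> split_ifs <;> positivity

/-- Indicator that the embedding `v` of `G` is a copy in `X ∪ {e}`. -/
noncomputable def Ind {n m : ℕ} (G : Finset (EdgeK m)) (e : EdgeK n) (v : Fin m ↪ Fin n)
    (X : Config n) : ℝ :=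
  if ∀ b ∈ G, addEdge X e (mapEdge v b) = true then 1 else 0

lemma rootedCount_eq_sum {n m : ℕ} (X : Config n) (G : Finset (EdgeK m)) (e : EdgeK n) :
    (rootedCount X G e : ℝ) = ∑ v ∈ rootSet G e, Ind G e v X := by
  unfold rootedCount rootSet Ind
  rw [Finset.sum_boole, Finset.filter_filter]

lemma Ind_setEdge_of_not {n m : ℕ} (G : Finset (EdgeK m)) (e : EdgeK n) (v : Fin m ↪ Fin n)
    (X : Config n) (f : EdgeK n) (c : Bool) (hf : f = e ∨ ∀ b ∈ G, mapEdge v b ≠ f) :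
    Ind G e v (setEdge X f c) = Ind G e v X := by
  unfold Ind
  congr 1
  apply propext
  apply forall_congr'
  intro b
  apply forall_congr'
  intro hb
  have : addEdge (setEdge X f c) e (mapEdge v b) = addEdge X e (mapEdge v b) := by
    unfold addEdge setEdge
    by_cases h1 : mapEdge v b = e
    · simp [h1]
    · rcases hf with rfl | hf
      · simp [h1]
      · simp [h1, hf b hb]
  rw [this]

lemma Ind_nonneg {n m : ℕ} (G : Finset (EdgeK m)) (e : EdgeK n) (v : Fin m ↪ Fin n)
    (X : Config n) : 0 ≤ Ind G e v X := by unfold Ind; split_ifs <;> norm_num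

lemma Ind_le_one {n m : ℕ} (G : Finset (EdgeK m)) (e : EdgeK n) (v : Fin m ↪ Fin n)
    (X : Config n) : Ind G e v X ≤ 1 := by unfold Ind; split_ifs <;> norm_num

lemma Ind_setEdge_false {n m : ℕ} (G : Finset (EdgeK m)) (e : EdgeK n) (v : Fin m ↪ Fin n)
    (X : Config n) (b : EdgeK m) (hb : b ∈ G) (hbe : mapEdge v b ≠ e) :
    Ind G e v (setEdge X (mapEdge v b) false) = 0 := by
  unfold Ind
  rw [if_neg]
  intro h
  have := h b hb
  simp [addEdge, setEdge, hbe] at this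

lemma Ind_setEdge_true {n m : ℕ} (G : Finset (EdgeK m)) (e : EdgeK n) (v : Fin m ↪ Fin n)
    (X : Config n) (b : EdgeK m) (hb : b ∈ G) :
    Ind G e v (setEdge X (mapEdge v b) true) = Ind (G.erase b) e v X := by
  unfold Ind
  congr 1
  apply propext
  constructor
  · intro h c hc
    have hc' := Finset.mem_erase.mp hc
    have := h c hc'.2
    have hne : mapEdge v c ≠ mapEdge v b := fun h => hc'.1 (mapEdge_injective v h)
    simpa [addEdge, setEdge, hne] using this
  · intro h c hc
    by_cases hcb : c = b
    · subst hcb; simp [addEdge, setEdge]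
    · have hne : mapEdge v c ≠ mapEdge v b := fun h => hcb (mapEdge_injective v h)
      have := h c (Finset.mem_erase.mpr ⟨hcb, hc⟩)
      simpa [addEdge, setEdge, hne] using this

lemma step_v {n m : ℕ} (G : Finset (EdgeK m)) (e : EdgeK n) (v : Fin m ↪ Fin n)
    (hv : v ∈ rootSet G e) (X : Config n) (p : EdgeK n → ℝ) (P : ℝ)
    (hP : ∀ f, p f ≤ P) :
    ∑ f, (p f * (Ind G e v (setEdge X f true) - Ind G e v X)
        + (1 - p f) * (Ind G e v (setEdge X f false) - Ind G e v X))
      ≤ P * (∑ b ∈ G, if v ∈ rootSet (G.erase b) e then Ind (G.erase b) e v X else 0)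
        - ((G.card : ℝ) - 1) * Ind G e v X := by
  obtain ⟨a, ha, hae⟩ := (Finset.mem_filter.mp hv).2
  have hsub : ∑ f ∈ (G.erase a).image (mapEdge v),
      (p f * (Ind G e v (setEdge X f true) - Ind G e v X)
        + (1 - p f) * (Ind G e v (setEdge X f false) - Ind G e v X))
      = ∑ f, (p f * (Ind G e v (setEdge X f true) - Ind G e v X)
        + (1 - p f) * (Ind G e v (setEdge X f false) - Ind G e v X)) := by
    apply Finset.sum_subset (Finset.subset_univ _)
    intro f _ hf
    have hf' : f = e ∨ ∀ b ∈ G, mapEdge v b ≠ f := by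
      by_cases hfe : f = e
      · exact Or.inl hfe
      · right
        intro b hb hbf
        apply hf
        refine Finset.mem_image.mpr ⟨b, Finset.mem_erase.mpr ⟨?_, hb⟩, hbf⟩
        rintro rfl
        exact hfe (hbf.symm.trans hae)
    rw [Ind_setEdge_of_not G e v X f true hf', Ind_setEdge_of_not G e v X f false hf']
    simp
  rw [← hsub, Finset.sum_image (fun x _ y _ h => mapEdge_injective v h)]
  have hroot : ∀ b ∈ G, (v ∈ rootSet (G.erase b) e ↔ b ≠ a) := by
    intro b hb
    constructor
    · rintro h rfl
      obtain ⟨a', ha', h'⟩ := (Finset.mem_filter.mp h).2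
      exact (Finset.mem_erase.mp ha').1 (mapEdge_injective v (h'.trans hae.symm))
    · intro h
      exact Finset.mem_filter.mpr ⟨Finset.mem_univ _, a, Finset.mem_erase.mpr ⟨h.symm, ha⟩, hae⟩
  have hsum : (∑ b ∈ G, if v ∈ rootSet (G.erase b) e then Ind (G.erase b) e v X else 0)
      = ∑ b ∈ G.erase a, Ind (G.erase b) e v X := by
    rw [← Finset.add_sum_erase _ _ ha, if_neg (fun h => (hroot a ha).mp h rfl), zero_add]
    apply Finset.sum_congr rfl
    intro b hb
    have hb' := Finset.mem_erase.mp hb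
    rw [if_pos ((hroot b hb'.2).mpr hb'.1)]
  have hcard : ((G.card : ℝ) - 1) * Ind G e v X = ∑ b ∈ G.erase a, Ind G e v X := by
    rw [Finset.sum_const, Finset.card_erase_of_mem ha, nsmul_eq_mul,
      Nat.cast_sub (Finset.card_pos.mpr ⟨a, ha⟩)]
    simp
  rw [hsum, hcard, Finset.mul_sum, ← Finset.sum_sub_distrib]
  apply Finset.sum_le_sum
  intro b hb
  have hb' := Finset.mem_erase.mp hb
  have hbe : mapEdge v b ≠ e := fun h => hb'.1 (mapEdge_injective v (h.trans hae.symm))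
  rw [Ind_setEdge_false G e v X b hb'.2 hbe, Ind_setEdge_true G e v X b hb'.2]
  have h1 := mul_le_mul_of_nonneg_right (hP (mapEdge v b)) (Ind_nonneg (G.erase b) e v X)
  linarith

lemma drift_count {L n m : ℕ} (hm : m ≤ L) (G : Finset (EdgeK m)) (hG : 2 ≤ G.card) (e : EdgeK n)
    (X : Config n) (R : ℝ) (hX : goodCfg L n R X) (p : EdgeK n → ℝ) (P : ℝ) (hP0 : 0 ≤ P)
    (hP : ∀ f, p f ≤ P) :
    ∑ f, (p f * ((rootedCount (setEdge X f true) G e : ℝ) - rootedCount X G e)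
        + (1 - p f) * ((rootedCount (setEdge X f false) G e : ℝ) - rootedCount X G e))
      ≤ ((G.card : ℝ) - 1) *
        (P * R ^ (G.card - 2) * (2 * (G.card : ℝ) * (n : ℝ) ^ (m - 2)) - rootedCount X G e) := by
  have h1 : ∑ f, (p f * ((rootedCount (setEdge X f true) G e : ℝ) - rootedCount X G e)
        + (1 - p f) * ((rootedCount (setEdge X f false) G e : ℝ) - rootedCount X G e))
      = ∑ v ∈ rootSet G e, ∑ f, (p f * (Ind G e v (setEdge X f true) - Ind G e v X)
        + (1 - p f) * (Ind G e v (setEdge X f false) - Ind G e v X)) := by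
    rw [Finset.sum_comm]
    apply Finset.sum_congr rfl
    intro f _
    simp only [rootedCount_eq_sum]
    rw [Finset.sum_add_distrib, ← Finset.mul_sum, ← Finset.mul_sum, Finset.sum_sub_distrib,
      Finset.sum_sub_distrib]
  rw [h1]
  refine (Finset.sum_le_sum fun v hv => step_v G e v hv X p P hP).trans ?_
  rw [Finset.sum_sub_distrib, ← Finset.mul_sum, ← Finset.mul_sum, ← rootedCount_eq_sum]
  have h2 : ∑ v ∈ rootSet G e, ∑ b ∈ G,
      (if v ∈ rootSet (G.erase b) e then Ind (G.erase b) e v X else 0)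
      = ∑ b ∈ G, (rootedCount X (G.erase b) e : ℝ) := by
    rw [Finset.sum_comm]
    apply Finset.sum_congr rfl
    intro b hb
    rw [rootedCount_eq_sum, ← Finset.sum_filter]
    apply Finset.sum_congr _ (fun _ _ => rfl)
    ext v
    simp only [Finset.mem_filter, and_iff_right_iff_imp]
    intro h
    obtain ⟨a, ha, h'⟩ := (Finset.mem_filter.mp h).2
    exact Finset.mem_filter.mpr ⟨Finset.mem_univ _, a, Finset.mem_of_mem_erase ha, h'⟩
  rw [h2]
  have h3 : ∑ b ∈ G, (rootedCount X (G.erase b) e : ℝ)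
      ≤ ∑ b ∈ G, 2 * ((G.card : ℝ) - 1) * (n : ℝ) ^ (m - 2) * R ^ (G.card - 2) := by
    apply Finset.sum_le_sum
    intro b hb
    have hc := Finset.card_erase_of_mem hb
    have := hX.le hm (G.erase b) (by omega) e
    rw [hc, Nat.cast_sub (by omega), Nat.sub_sub] at this
    simpa using this
  rw [Finset.sum_const, nsmul_eq_mul] at h3
  have := mul_le_mul_of_nonneg_left h3 hP0
  linarith

/-! ### Second moment of the increments -/

/-- The maximal influence of the edge `f` on the count rooted at `e`. -/
noncomputable def Cf {n m : ℕ} (G : Finset (EdgeK m)) (e f : EdgeK n) : ℝ :=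
  ∑ v ∈ rootSet G e, if f ≠ e ∧ ∃ b ∈ G, mapEdge v b = f then (1 : ℝ) else 0

lemma Cf_nonneg {n m : ℕ} (G : Finset (EdgeK m)) (e f : EdgeK n) : 0 ≤ Cf G e f := by
  unfold Cf
  apply Finset.sum_nonneg
  intro v _
  split_ifs <;> norm_num

lemma diff_le_Cf {n m : ℕ} (X : Config n) (G : Finset (EdgeK m)) (e f : EdgeK n) (c : Bool) :
    |(rootedCount (setEdge X f c) G e : ℝ) - rootedCount X G e| ≤ Cf G e f := by
  rw [rootedCount_eq_sum, rootedCount_eq_sum, ← Finset.sum_sub_distrib]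
  refine (Finset.abs_sum_le_sum_abs _ _).trans ?_
  unfold Cf
  apply Finset.sum_le_sum
  intro v _
  split_ifs with h
  · rw [abs_le]
    have h1 := Ind_nonneg G e v (setEdge X f c)
    have h2 := Ind_le_one G e v (setEdge X f c)
    have h3 := Ind_nonneg G e v X
    have h4 := Ind_le_one G e v X
    constructor <;> linarith
  · rw [Ind_setEdge_of_not, sub_self, abs_zero]
    by_cases hf : f = e
    · exact Or.inl hf
    · right
      intro b hb hbf
      exact h ⟨hf, b, hb, hbf⟩

lemma Cf_le {n m : ℕ} (G : Finset (EdgeK m)) (e f : EdgeK n) :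
    Cf G e f ≤ (G.card : ℝ) ^ 2 * (8 * (n : ℝ) ^ (m - 3)) := by
  unfold Cf
  rw [Finset.sum_boole]
  have h1 : ((rootSet G e).filter fun v => f ≠ e ∧ ∃ b ∈ G, mapEdge v b = f) ⊆
      G.offDiag.biUnion fun ab =>
        univ.filter fun v : Fin m ↪ Fin n => mapEdge v ab.1 = e ∧ mapEdge v ab.2 = f := by
    intro v hv
    obtain ⟨hv1, hfe, b, hb, hbf⟩ := Finset.mem_filter.mp hv
    obtain ⟨a, ha, hae⟩ := (Finset.mem_filter.mp hv1).2
    refine Finset.mem_biUnion.mpr ⟨(a, b), Finset.mem_offDiag.mpr ⟨ha, hb, ?_⟩, ?_⟩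
    · intro hab
      have hab' : a = b := hab
      subst hab'
      exact hfe (hbf.symm.trans hae)
    · exact Finset.mem_filter.mpr ⟨Finset.mem_univ _, hae, hbf⟩
  have h2 := (Finset.card_le_card h1).trans (Finset.card_biUnion_le_card_mul _ _ (8 * n ^ (m - 3))
    (fun ab hab => card_root2_le ab.1 ab.2 (Finset.mem_offDiag.mp hab).2.2 e f))
  have h3 : G.offDiag.card ≤ G.card ^ 2 := by
    rw [Finset.offDiag_card, sq]; exact Nat.sub_le _ _
  have h4 := h2.trans (Nat.mul_le_mul_right _ h3)
  exact_mod_cast h4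

lemma sum_Cf_le {n m : ℕ} (G : Finset (EdgeK m)) (e : EdgeK n) :
    ∑ f, Cf G e f ≤ (G.card : ℝ) * ((G.card : ℝ) * (2 * (n : ℝ) ^ (m - 2))) := by
  unfold Cf
  rw [Finset.sum_comm]
  have h1 : ∀ v ∈ rootSet G e,
      (∑ f : EdgeK n, if f ≠ e ∧ ∃ b ∈ G, mapEdge v b = f then (1 : ℝ) else 0) ≤ G.card := by
    intro v _
    rw [Finset.sum_boole]
    have : (univ.filter fun f : EdgeK n => f ≠ e ∧ ∃ b ∈ G, mapEdge v b = f)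
        ⊆ G.image (mapEdge v) := by
      intro f hf
      obtain ⟨-, b, hb, hbf⟩ := (Finset.mem_filter.mp hf).2
      exact Finset.mem_image.mpr ⟨b, hb, hbf⟩
    exact_mod_cast (Finset.card_le_card this).trans Finset.card_image_le
  refine (Finset.sum_le_sum h1).trans ?_
  rw [Finset.sum_const, nsmul_eq_mul, mul_comm]
  apply mul_le_mul_of_nonneg_left _ (by positivity)
  exact_mod_cast card_rootSet_le G e

lemma card_G_le {m : ℕ} (G : Finset (EdgeK m)) : G.card ≤ m.choose 2 := by
  rw [← card_edgeK]; exact Finset.card_le_univ G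

lemma three_le_of_card {m : ℕ} (G : Finset (EdgeK m)) (hG : 2 ≤ G.card) : 3 ≤ m := by
  by_contra h
  have h1 := card_G_le G
  have : m ≤ 2 := by omega
  have h2 := Nat.choose_le_choose 2 this
  simp at h2
  omega

/-- Normalised rooted count. -/
noncomputable def Zn {n m : ℕ} (G : Finset (EdgeK m)) (e : EdgeK n) (X : Config n) : ℝ :=
  (rootedCount X G e : ℝ) / (2 * (G.card : ℝ) * (n : ℝ) ^ (m - 2))

lemma one_step {L n m : ℕ} (hn : 2 ≤ n) (hm : m ≤ L) (G : Finset (EdgeK m)) (hG : 2 ≤ G.card)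
    (e : EdgeK n) (X : Config n) (R : ℝ) (hX : goodCfg L n R X) (p : EdgeK n → ℝ) (P : ℝ)
    (hP0 : 0 ≤ P) (hp0 : ∀ f, 0 ≤ p f) (hp1 : ∀ f, p f ≤ 1)
    (hP : ∀ f, p f ≤ P) (lam : ℝ) (hl0 : 0 ≤ lam) (hl : lam * (4 * (G.card : ℝ) / n) ≤ 1)
    (a : ℝ) (ha : a = P * R ^ (G.card - 2)) :
    ((n.choose 2 : ℝ))⁻¹ * ∑ f, (p f * Real.exp (lam * (Zn G e (setEdge X f true) - a))
        + (1 - p f) * Real.exp (lam * (Zn G e (setEdge X f false) - a)))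
      ≤ Real.exp (lam * (1 - ((G.card : ℝ) - 1) / (n.choose 2 : ℝ)) * (Zn G e X - a)
          + 16 * (G.card : ℝ) ^ 2 / (n : ℝ) ^ 3 * lam ^ 2) := by
  have hn0 : 0 < (n : ℝ) := by exact_mod_cast (by omega : 0 < n)
  have hk0 : 0 < (G.card : ℝ) := by exact_mod_cast (by omega : 0 < G.card)
  set k : ℝ := (G.card : ℝ) with hk
  set D : ℝ := 2 * k * (n : ℝ) ^ (m - 2) with hD
  have hDpos : 0 < D := by positivity
  have hMpos : 0 < (n.choose 2 : ℝ) := by exact_mod_cast Nat.choose_pos hn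
  set M : ℝ := (n.choose 2 : ℝ) with hM
  have hMlow : (n : ℝ) ^ 2 / 4 ≤ M := by
    rw [hM, Nat.cast_choose_two]
    have : (2 : ℝ) ≤ n := by exact_mod_cast hn
    nlinarith
  set cf : EdgeK n → ℝ := fun f => Cf G e f / D with hcf
  have hcf0 : ∀ f, 0 ≤ cf f := fun f => div_nonneg (Cf_nonneg G e f) hDpos.le
  have hdiff : ∀ f c, |Zn G e (setEdge X f c) - Zn G e X| ≤ cf f := by
    intro f c
    unfold Zn
    rw [← sub_div, abs_div, abs_of_pos hDpos]
    exact div_le_div_of_nonneg_right (diff_le_Cf X G e f c) hDpos.le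
  have hcfmax : ∀ f, cf f ≤ 4 * k / n := by
    intro f
    rw [hcf, div_le_div_iff₀ hDpos hn0]
    have h1 := mul_le_mul_of_nonneg_right (Cf_le G e f) hn0.le
    have h3 := three_le_of_card G hG
    have h2 : (n : ℝ) ^ (m - 2) = (n : ℝ) ^ (m - 3) * n := by
      rw [← pow_succ]; congr 1; omega
    rw [hD, h2]
    refine h1.trans (le_of_eq ?_)
    ring
  have hcfsum : ∑ f, cf f ≤ k := by
    rw [hcf, ← Finset.sum_div, div_le_iff₀ hDpos]
    refine (sum_Cf_le G e).trans (le_of_eq ?_)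
    rw [hD]; ring
  have hcfsq : ∑ f, cf f ^ 2 ≤ 4 * k ^ 2 / n := by
    calc ∑ f, cf f ^ 2 ≤ ∑ f, 4 * k / n * cf f := by
          apply Finset.sum_le_sum
          intro f _
          rw [sq]
          exact mul_le_mul_of_nonneg_right (hcfmax f) (hcf0 f)
      _ = 4 * k / n * ∑ f, cf f := by rw [Finset.mul_sum]
      _ ≤ 4 * k / n * k := mul_le_mul_of_nonneg_left hcfsum (by positivity)
      _ = _ := by ring
  have hexp : ∀ f c, Real.exp (lam * (Zn G e (setEdge X f c) - a)) ≤
      Real.exp (lam * (Zn G e X - a)) *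
        (1 + lam * (Zn G e (setEdge X f c) - Zn G e X) + lam ^ 2 * cf f ^ 2) := by
    intro f c
    have h1 : lam * (Zn G e (setEdge X f c) - a) = lam * (Zn G e X - a) +
        lam * (Zn G e (setEdge X f c) - Zn G e X) := by ring
    rw [h1, Real.exp_add]
    apply mul_le_mul_of_nonneg_left _ (Real.exp_pos _).le
    set d := Zn G e (setEdge X f c) - Zn G e X with hd
    have h2 : |d| ≤ cf f := hdiff f c
    have h3 : |lam * d| ≤ 1 := by
      rw [abs_mul, abs_of_nonneg hl0]
      exact (mul_le_mul_of_nonneg_left (h2.trans (hcfmax f)) hl0).trans hl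
    have h4 := Real.abs_exp_sub_one_sub_id_le h3
    have h5 := (abs_le.mp h4).2
    have h6 : (lam * d) ^ 2 ≤ lam ^ 2 * cf f ^ 2 := by
      rw [mul_pow]
      apply mul_le_mul_of_nonneg_left _ (by positivity)
      rw [← sq_abs]
      exact pow_le_pow_left₀ (abs_nonneg _) h2 2
    linarith
  have hdrift : ∑ f, (p f * (Zn G e (setEdge X f true) - Zn G e X)
        + (1 - p f) * (Zn G e (setEdge X f false) - Zn G e X)) ≤ (k - 1) * (a - Zn G e X) := by
    have h1 := drift_count hm G hG e X R hX p P hP0 hP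
    have h2 : ∑ f, (p f * (Zn G e (setEdge X f true) - Zn G e X)
        + (1 - p f) * (Zn G e (setEdge X f false) - Zn G e X))
        = (∑ f, (p f * ((rootedCount (setEdge X f true) G e : ℝ) - rootedCount X G e)
        + (1 - p f) * ((rootedCount (setEdge X f false) G e : ℝ) - rootedCount X G e))) / D := by
      rw [Finset.sum_div]
      apply Finset.sum_congr rfl
      intro f _
      unfold Zn
      ring
    rw [h2, div_le_iff₀ hDpos]
    refine h1.trans (le_of_eq ?_)
    have hZ : Zn G e X * D = rootedCount X G e := div_mul_cancel₀ _ hDpos.ne'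
    rw [ha, ← hZ, ← hk, ← hD]
    ring
  have hE := Real.exp_pos (lam * (Zn G e X - a))
  calc M⁻¹ * ∑ f, (p f * Real.exp (lam * (Zn G e (setEdge X f true) - a))
        + (1 - p f) * Real.exp (lam * (Zn G e (setEdge X f false) - a)))
      ≤ M⁻¹ * ∑ f, Real.exp (lam * (Zn G e X - a)) * (1 +
          lam * (p f * (Zn G e (setEdge X f true) - Zn G e X)
            + (1 - p f) * (Zn G e (setEdge X f false) - Zn G e X)) + lam ^ 2 * cf f ^ 2) := by
        apply mul_le_mul_of_nonneg_left _ (by positivity)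
        apply Finset.sum_le_sum
        intro f _
        have h1 := mul_le_mul_of_nonneg_left (hexp f true) (hp0 f)
        have h2 := mul_le_mul_of_nonneg_left (hexp f false) (sub_nonneg.mpr (hp1 f))
        linarith
    _ = Real.exp (lam * (Zn G e X - a)) * (1 +
          lam * (M⁻¹ * ∑ f, (p f * (Zn G e (setEdge X f true) - Zn G e X)
            + (1 - p f) * (Zn G e (setEdge X f false) - Zn G e X)))
            + lam ^ 2 * (M⁻¹ * ∑ f, cf f ^ 2)) := by
        rw [← Finset.mul_sum, Finset.sum_add_distrib, Finset.sum_add_distrib, ← Finset.mul_sum,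
          ← Finset.mul_sum, Finset.sum_const, Finset.card_univ, card_edgeK, nsmul_eq_mul, ← hM]
        field_simp
    _ ≤ Real.exp (lam * (Zn G e X - a)) * (1 +
          lam * (M⁻¹ * ((k - 1) * (a - Zn G e X)))
            + lam ^ 2 * (16 * k ^ 2 / (n : ℝ) ^ 3)) := by
        apply mul_le_mul_of_nonneg_left _ hE.le
        have hMi : M⁻¹ ≤ 4 / (n : ℝ) ^ 2 := by
          rw [inv_le_comm₀ hMpos (by positivity), inv_div]
          exact hMlow
        have h1 : M⁻¹ * ∑ f, cf f ^ 2 ≤ 16 * k ^ 2 / (n : ℝ) ^ 3 := by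
          calc M⁻¹ * ∑ f, cf f ^ 2 ≤ 4 / (n : ℝ) ^ 2 * (4 * k ^ 2 / n) := by
                apply mul_le_mul hMi hcfsq (Finset.sum_nonneg fun f _ => sq_nonneg _)
                positivity
            _ = _ := by field_simp; norm_num
        gcongr
    _ ≤ Real.exp (lam * (Zn G e X - a)) * Real.exp (
          lam * (M⁻¹ * ((k - 1) * (a - Zn G e X)))
            + lam ^ 2 * (16 * k ^ 2 / (n : ℝ) ^ 3)) := by
        apply mul_le_mul_of_nonneg_left _ hE.le
        have := Real.add_one_le_exp (lam * (M⁻¹ * ((k - 1) * (a - Zn G e X)))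
            + lam ^ 2 * (16 * k ^ 2 / (n : ℝ) ^ 3))
        linarith
    _ = _ := by
        rw [← Real.exp_add]
        congr 1
        field_simp
        ring

/-! ### The killed chain -/

/-- The kernel `K` killed upon being in `B`. -/
noncomputable def killed {n : ℕ} (K : Config n → Config n → ℝ) (B : Config n → Prop) :
    Config n → Config n → ℝ :=
  fun x y => if B x then 0 else K x y

lemma kernelStep_nonneg {n : ℕ} {K : Config n → Config n → ℝ} (hK : ∀ x y, 0 ≤ K x y) (t : ℕ)
    (x y : Config n) : 0 ≤ kernelStep K t x y := by
  induction t generalizing y with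
  | zero => unfold kernelStep; split_ifs <;> norm_num
  | succ t ih =>
    unfold kernelStep
    exact Finset.sum_nonneg fun z _ => mul_nonneg (ih z) (hK z y)

lemma killed_nonneg {n : ℕ} {K : Config n → Config n → ℝ} (hK : ∀ x y, 0 ≤ K x y)
    (B : Config n → Prop) (x y : Config n) : 0 ≤ killed K B x y := by
  unfold killed; split_ifs
  · exact le_rfl
  · exact hK x y

lemma kernelStep_killed_le {n : ℕ} {K : Config n → Config n → ℝ} (hK : ∀ x y, 0 ≤ K x y)
    (B : Config n → Prop) (t : ℕ) (x y : Config n) :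
    kernelStep (killed K B) t x y ≤ kernelStep K t x y := by
  induction t generalizing y with
  | zero => exact le_rfl
  | succ t ih =>
    unfold kernelStep
    apply Finset.sum_le_sum
    intro z _
    apply mul_le_mul (ih z) _ (killed_nonneg hK B z y) (kernelStep_nonneg hK t x z)
    unfold killed; split_ifs
    · exact hK z y
    · exact le_rfl

lemma killed_mass {n : ℕ} {K : Config n → Config n → ℝ} (hK1 : ∀ x, ∑ y, K x y = 1)
    (B : Config n → Prop) (t : ℕ) (x : Config n) :
    ∑ y, kernelStep (killed K B) t x y
      = 1 - ∑ s ∈ Finset.range t, ∑ y ∈ univ.filter B, kernelStep (killed K B) s x y := by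
  induction t with
  | zero => simp [kernelStep]
  | succ t ih =>
    rw [Finset.sum_range_succ]
    have h1 : ∑ y, kernelStep (killed K B) (t + 1) x y
        = ∑ z, kernelStep (killed K B) t x z - ∑ y ∈ univ.filter B, kernelStep (killed K B) t x y := by
      simp only [kernelStep]
      rw [Finset.sum_comm, Finset.sum_filter, ← Finset.sum_sub_distrib]
      apply Finset.sum_congr rfl
      intro z _
      rw [← Finset.mul_sum]
      by_cases hz : B z
      · simp [killed, hz]
      · simp [killed, hz, hK1]
    rw [h1, ih]
    ring

lemma killed_exp {n : ℕ} {K : Config n → Config n → ℝ} (hK : ∀ x y, 0 ≤ K x y)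
    (B : Config n → Prop) (D : Config n → ℝ) (w C Lam : ℝ) (hw0 : 0 ≤ w) (hw1 : w ≤ 1)
    (hC : 0 ≤ C)
    (hstep : ∀ x, ¬ B x → ∀ lam, 0 ≤ lam → lam ≤ Lam →
      ∑ y, K x y * Real.exp (lam * D y) ≤ Real.exp (lam * w * D x + C * lam ^ 2))
    (x : Config n) (t : ℕ) : ∀ lam, 0 ≤ lam → lam ≤ Lam →
    ∑ y, kernelStep (killed K B) t x y * Real.exp (lam * D y)
      ≤ Real.exp (lam * w ^ t * D x + C * lam ^ 2 * t) := by
  induction t with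
  | zero => intro lam _ _; simp [kernelStep]
  | succ t ih =>
    intro lam h0 h1
    have hlw : lam * w ≤ lam := mul_le_of_le_one_right h0 hw1
    have hlw0 : 0 ≤ lam * w := mul_nonneg h0 hw0
    calc ∑ y, kernelStep (killed K B) (t + 1) x y * Real.exp (lam * D y)
        = ∑ z, kernelStep (killed K B) t x z *
            ∑ y, killed K B z y * Real.exp (lam * D y) := by
          simp only [kernelStep, Finset.sum_mul, Finset.mul_sum]
          rw [Finset.sum_comm]
          simp only [mul_assoc]
      _ ≤ ∑ z, kernelStep (killed K B) t x z *
            (Real.exp (lam * w * D z) * Real.exp (C * lam ^ 2)) := by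
          apply Finset.sum_le_sum
          intro z _
          apply mul_le_mul_of_nonneg_left _ (kernelStep_nonneg (killed_nonneg hK B) t x z)
          by_cases hz : B z
          · simp only [killed, hz, if_true, zero_mul, Finset.sum_const_zero]
            positivity
          · simp only [killed, hz, if_false]
            rw [← Real.exp_add]
            exact hstep z hz lam h0 h1
      _ = (∑ z, kernelStep (killed K B) t x z * Real.exp (lam * w * D z)) *
            Real.exp (C * lam ^ 2) := by
          rw [Finset.sum_mul]; simp only [mul_assoc]
      _ ≤ Real.exp (lam * w * w ^ t * D x + C * (lam * w) ^ 2 * t) * Real.exp (C * lam ^ 2) :=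
          mul_le_mul_of_nonneg_right (ih (lam * w) hlw0 (hlw.trans h1)) (Real.exp_pos _).le
      _ ≤ _ := by
          rw [← Real.exp_add]
          apply Real.exp_le_exp.mpr
          have h2 : (lam * w) ^ 2 ≤ lam ^ 2 := pow_le_pow_left₀ hlw0 hlw 2
          have h3 : C * (lam * w) ^ 2 * t ≤ C * lam ^ 2 * t := by gcongr
          push_cast
          rw [pow_succ w t]
          linarith

lemma killed_tail {n : ℕ} {K : Config n → Config n → ℝ} (hK : ∀ x y, 0 ≤ K x y)
    (B : Config n → Prop) (D : Config n → ℝ) (w C Lam : ℝ) (hw0 : 0 ≤ w) (hw1 : w ≤ 1)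
    (hC : 0 ≤ C) (hLam : 0 ≤ Lam)
    (hstep : ∀ x, ¬ B x → ∀ lam, 0 ≤ lam → lam ≤ Lam →
      ∑ y, K x y * Real.exp (lam * D y) ≤ Real.exp (lam * w * D x + C * lam ^ 2))
    (x : Config n) (t : ℕ) (θ : ℝ) :
    ∑ y ∈ univ.filter (fun y => θ < D y), kernelStep (killed K B) t x y
      ≤ Real.exp (-(Lam * θ) + (Lam * w ^ t * D x + C * Lam ^ 2 * t)) := by
  have h1 := killed_exp hK B D w C Lam hw0 hw1 hC hstep x t Lam hLam le_rfl
  rw [Real.exp_add]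
  refine le_trans ?_ (mul_le_mul_of_nonneg_left h1 (Real.exp_pos _).le)
  rw [Finset.mul_sum, Finset.sum_filter]
  apply Finset.sum_le_sum
  intro y _
  have hu := kernelStep_nonneg (killed_nonneg hK B) t x y
  split_ifs with h
  · have : 1 ≤ Real.exp (-(Lam * θ)) * Real.exp (Lam * D y) := by
      rw [← Real.exp_add]
      apply Real.one_le_exp
      nlinarith
    nlinarith
  · positivity

lemma final_prob {n : ℕ} {K : Config n → Config n → ℝ} (hK : ∀ x y, 0 ≤ K x y)
    (hK1 : ∀ x, ∑ y, K x y = 1) (B A : Config n → Prop) (T : ℕ) (x : Config n) (b : ℝ)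
    (hB : ∀ s < T, ∑ y ∈ univ.filter B, kernelStep (killed K B) s x y ≤ b)
    (hA : ∑ y ∈ univ.filter (fun y => ¬ A y), kernelStep (killed K B) T x y ≤ b) :
    1 - ((T : ℝ) + 1) * b ≤ ∑ y ∈ univ.filter A, kernelStep K T x y := by
  have h1 := killed_mass hK1 B T x
  have h2 : ∑ s ∈ Finset.range T, ∑ y ∈ univ.filter B, kernelStep (killed K B) s x y ≤ T * b := by
    have := Finset.sum_le_sum (fun s hs => hB s (Finset.mem_range.mp hs))
    simpa using this
  have h3 : ∑ y ∈ univ.filter A, kernelStep (killed K B) T x y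
      ≤ ∑ y ∈ univ.filter A, kernelStep K T x y :=
    Finset.sum_le_sum fun y _ => kernelStep_killed_le hK B T x y
  have h4 := Finset.sum_filter_add_sum_filter_not univ A (fun y => kernelStep (killed K B) T x y)
  linarith

/-! ### Real analysis -/

lemma pow_sub_pow_le' (x y : ℝ) (hy : 0 ≤ y) (hyx : y ≤ x) (j : ℕ) :
    x ^ (j + 1) - y ^ (j + 1) ≤ ((j : ℝ) + 1) * (x - y) * x ^ j := by
  induction j with
  | zero => simp
  | succ j ih =>
    have h1 := mul_le_mul_of_nonneg_left ih (hy.trans hyx)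
    have h2 : y ^ (j + 1) ≤ x ^ (j + 1) := pow_le_pow_left₀ hy hyx _
    have h3 := mul_le_mul_of_nonneg_left h2 (sub_nonneg.mpr hyx)
    push_cast
    calc x ^ (j + 1 + 1) - y ^ (j + 1 + 1)
        = x * (x ^ (j + 1) - y ^ (j + 1)) + (x - y) * y ^ (j + 1) := by ring
      _ ≤ x * (((j : ℝ) + 1) * (x - y) * x ^ j) + (x - y) * x ^ (j + 1) := add_le_add h1 h3
      _ = _ := by ring

lemma arith_gap (r ε γ μ P J : ℝ) (j Jn : ℕ) (hJ : J = Jn) (hj : j + 1 ≤ Jn) (hε : 0 < ε)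
    (hμ : 0 < μ) (hεγ : ε * (4 * J) ≤ γ) (hεμ : ε ≤ μ) (hμr : μ ≤ r) (hR : r + ε ≤ 1)
    (hP : P ≤ r + ε - γ) :
    P * (r + ε) ^ j ≤ r ^ (j + 1) ∧
    ε / 2 * μ ^ Jn ≤ (r + ε) ^ (j + 1) - r ^ (j + 1) ∧
    ε / 2 * μ ^ Jn ≤ (r - ε) ^ (j + 1) - P * (r + ε) ^ j
      - (r ^ (j + 1) - P * (r + ε) ^ j) / 2 := by
  have hr : 0 < r := hμ.trans_le hμr
  have hj' : (j : ℝ) + 1 ≤ J := by rw [hJ]; exact_mod_cast hj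
  have hj0 : (0 : ℝ) ≤ j := Nat.cast_nonneg j
  have h1 := pow_sub_pow_le' (r + ε) r hr.le (by linarith) j
  have h2 := pow_sub_pow_le' r (r - ε) (by linarith) (by linarith) j
  set Q := (r + ε) ^ j with hQ
  have hQ1 : r ^ j ≤ Q := pow_le_pow_left₀ hr.le (by linarith) j
  have hQ0 : 0 < Q := by positivity
  have hQμ : μ ^ Jn ≤ Q := by
    calc μ ^ Jn ≤ (r + ε) ^ Jn := pow_le_pow_left₀ hμ.le (by linarith) _
      _ ≤ (r + ε) ^ j := pow_le_pow_of_le_one (by linarith) hR (by omega)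
  have hQμ' : ε / 2 * μ ^ Jn ≤ ε / 2 * Q := mul_le_mul_of_nonneg_left hQμ (by linarith)
  have hPQ : P * Q ≤ (r + ε - γ) * Q := mul_le_mul_of_nonneg_right hP hQ0.le
  have e1 : (r + ε) ^ (j + 1) = (r + ε) * Q := by rw [hQ]; ring
  have e2 : r ^ (j + 1) = r * r ^ j := by ring
  have h1' : ((j : ℝ) + 1) * (r + ε - r) * Q ≤ J * ε * Q := by
    have : ((j : ℝ) + 1) * (r + ε - r) ≤ J * ε := by
      rw [add_sub_cancel_left]; exact mul_le_mul_of_nonneg_right hj' hε.le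
    exact mul_le_mul_of_nonneg_right this hQ0.le
  have h2' : ((j : ℝ) + 1) * (r - (r - ε)) * r ^ j ≤ J * ε * Q := by
    have : ((j : ℝ) + 1) * (r - (r - ε)) ≤ J * ε := by
      rw [sub_sub_cancel]; exact mul_le_mul_of_nonneg_right hj' hε.le
    exact mul_le_mul this hQ1 (by positivity) (by nlinarith)
  have h3 : ε * (4 * J) * Q ≤ γ * Q := mul_le_mul_of_nonneg_right hεγ hQ0.le
  have h4 : ε * Q ≤ J * ε * Q := by
    have : ε ≤ J * ε := by nlinarith
    exact mul_le_mul_of_nonneg_right this hQ0.le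
  have h5 : r * r ^ j ≤ r * Q := mul_le_mul_of_nonneg_left hQ1 hr.le
  have hεQ : 0 < ε * Q := by positivity
  refine ⟨?_, ?_, ?_⟩
  · nlinarith
  · rw [e1, e2]; nlinarith
  · nlinarith

lemma PsiF_differentiable {s : ℕ} {V : Fin s → ℕ} (Pt : ∀ i, Finset (EdgeK (V i)))
    (β : Fin s → ℝ) : Differentiable ℝ (PsiF Pt β) := by
  unfold PsiF
  fun_prop

lemma phiF_eq {s : ℕ} {V : Fin s → ℕ} (Pt : ∀ i, Finset (EdgeK (V i)))
    (β : Fin s → ℝ) (p : ℝ) : phiF Pt β p = sig (PsiF Pt β p) := rfl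

lemma phiF_differentiable {s : ℕ} {V : Fin s → ℕ} (Pt : ∀ i, Finset (EdgeK (V i)))
    (β : Fin s → ℝ) : Differentiable ℝ (phiF Pt β) := by
  have h := PsiF_differentiable Pt β
  intro x
  unfold phiF
  apply DifferentiableAt.div (h.exp x) ((differentiable_const _).add h.exp x)
  have := Real.exp_pos (PsiF Pt β x)
  simp only [Pi.add_apply]
  positivity

lemma gap_exists (f : ℝ → ℝ) (hf : Differentiable ℝ f) (p q : ℝ) (hfix : f p = p)
    (hd : deriv f p < 1) (hne : ∀ x ∈ Set.Ioo p q, f x ≠ x) (a b : ℝ) (ha : p < a) (hb : b < q) :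
    ∃ γ > 0, ∀ x ∈ Set.Icc a b, f x ≤ x - γ := by
  rcases lt_or_ge b a with hab | hab
  · exact ⟨1, one_pos, fun x hx => absurd (hx.1.trans hx.2) (not_le.mpr hab)⟩
  have hpos : ∀ x ∈ Set.Ioo p q, f x < x := by
    intro x hx
    by_contra hcon
    have hcon : x < f x := lt_of_le_of_ne (not_lt.mp hcon) (hne x hx).symm
    have hder := (hf p).hasDerivAt
    rw [hasDerivAt_iff_tendsto_slope] at hder
    have h1 := hder.eventually_lt_const hd
    have h2 : ∀ᶠ y in nhdsWithin p (Set.Ioi p), slope f p y < 1 :=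
      h1.filter_mono (nhdsWithin_mono p (fun y hy => ne_of_gt hy))
    have h3 : ∀ᶠ y in nhdsWithin p (Set.Ioi p), y ∈ Set.Ioo p x := Ioo_mem_nhdsGT hx.1
    obtain ⟨y, hy1, hy2⟩ := (h2.and h3).exists
    rw [slope_def_field, hfix, div_lt_one (sub_pos.mpr hy2.1)] at hy1
    have hcont : ContinuousOn (fun z => f z - z) (Set.Icc y x) :=
      (hf.continuous.sub continuous_id).continuousOn
    have := intermediate_value_Icc hy2.2.le hcont
    obtain ⟨z, hz, hz0⟩ := this ⟨by linarith, by linarith⟩ (a := (0 : ℝ))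
    exact hne z ⟨hy2.1.trans_le hz.1, hz.2.trans_lt hx.2⟩ (by simpa [sub_eq_zero] using hz0)
  obtain ⟨x0, hx0, hmin⟩ := isCompact_Icc.exists_isMinOn (Set.nonempty_Icc.mpr hab)
    ((continuous_id.sub hf.continuous).continuousOn (s := Set.Icc a b))
  refine ⟨x0 - f x0, sub_pos.mpr (hpos x0 ⟨ha.trans_le hx0.1, hx0.2.trans_lt hb⟩), ?_⟩
  intro x hx
  have := hmin hx
  simp only [Set.mem_ofPred_eq, Pi.sub_apply, id] at this
  linarith

lemma poly_exp (C α : ℝ) (hα : 0 < α) :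
    ∃ N : ℕ, ∀ n ≥ N, C * (n : ℝ) ^ 4 * Real.exp (-(2 * α * n)) ≤ Real.exp (-(α * n)) := by
  have h1 := Real.tendsto_pow_mul_exp_neg_atTop_nhds_zero 4
  have h2 : Filter.Tendsto (fun n : ℕ => α * (n : ℝ)) Filter.atTop Filter.atTop :=
    tendsto_natCast_atTop_atTop.const_mul_atTop hα
  have h3 := h1.comp h2
  have hpos : 0 < α ^ 4 / (|C| + 1) := by positivity
  obtain ⟨N, hN⟩ := Filter.eventually_atTop.mp (h3.eventually_lt_const hpos)
  refine ⟨N, fun n hn => ?_⟩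
  have h4 := hN n hn
  simp only [Function.comp] at h4
  rw [lt_div_iff₀ (by positivity)] at h4
  have he : Real.exp (-(2 * α * n)) = Real.exp (-(α * n)) * Real.exp (-(α * n)) := by
    rw [← Real.exp_add]; congr 1; ring
  rw [he]
  have hE := Real.exp_pos (-(α * n))
  have h5 : C * (n : ℝ) ^ 4 * Real.exp (-(α * n)) ≤ 1 := by
    have h6 : α ^ 4 * ((n : ℝ) ^ 4 * Real.exp (-(α * n)) * (|C| + 1)) ≤ α ^ 4 * 1 := by
      rw [mul_pow] at h4; linarith
    have h7 := le_of_mul_le_mul_left h6 (by positivity)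
    have h8 : C ≤ |C| + 1 := (le_abs_self C).trans (by linarith)
    have h9 : 0 ≤ (n : ℝ) ^ 4 * Real.exp (-(α * n)) := by positivity
    nlinarith
  nlinarith

/-! ### Union bound and tail estimates -/

/-- Index type of all rooted counts. -/
abbrev RIdx (L n : ℕ) : Type := Σ m : Fin (L + 1), Finset (EdgeK m) × EdgeK n

/-- The number of patterns. -/
noncomputable def nPat (L : ℕ) : ℕ := ∑ m : Fin (L + 1), Fintype.card (Finset (EdgeK m))

lemma card_RIdx (L n : ℕ) : (Fintype.card (RIdx L n) : ℝ) ≤ nPat L * (n : ℝ) ^ 2 := by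
  have h : Fintype.card (RIdx L n) = nPat L * n.choose 2 := by
    rw [Fintype.card_sigma]
    simp only [Fintype.card_prod, card_edgeK n]
    rw [← Finset.sum_mul]
    rfl
  rw [h]
  push_cast
  apply mul_le_mul_of_nonneg_left _ (Nat.cast_nonneg _)
  exact_mod_cast Nat.choose_le_pow n 2

lemma union_good {L n : ℕ} (hn : 0 < n) (R : ℝ) (u : Config n → ℝ) (hu : ∀ y, 0 ≤ u y) (b : ℝ)
    (hb : 0 ≤ b)
    (h : ∀ m ≤ L, ∀ G : Finset (EdgeK m), 2 ≤ G.card → ∀ e : EdgeK n,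
      ∑ y ∈ univ.filter (fun y => R ^ (G.card - 1) < Zn G e y), u y ≤ b) :
    ∑ y ∈ univ.filter (fun y => ¬ goodCfg L n R y), u y ≤ nPat L * (n : ℝ) ^ 2 * b := by
  set S : RIdx L n → Finset (Config n) := fun i =>
    if 2 ≤ i.2.1.card then univ.filter (fun y => R ^ (i.2.1.card - 1) < Zn i.2.1 i.2.2 y) else ∅
    with hS
  have hsub : univ.filter (fun y => ¬ goodCfg L n R y) ⊆ univ.biUnion S := by
    intro y hy
    have hy' := (Finset.mem_filter.mp hy).2
    unfold goodCfg at hy'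
    push Not at hy'
    obtain ⟨m, hm, G, hG, e, hlt⟩ := hy'
    refine Finset.mem_biUnion.mpr ⟨⟨⟨m, by omega⟩, (G, e)⟩, Finset.mem_univ _, ?_⟩
    simp only [hS, hG, if_true, Finset.mem_filter, Finset.mem_univ, true_and]
    unfold Zn
    have hn0 : 0 < (n : ℝ) := by exact_mod_cast hn
    have hk0 : 0 < (G.card : ℝ) := by exact_mod_cast (by omega : 0 < G.card)
    rw [lt_div_iff₀ (by positivity)]
    linarith
  calc ∑ y ∈ univ.filter (fun y => ¬ goodCfg L n R y), u y
      ≤ ∑ y ∈ univ.biUnion S, u y :=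
        Finset.sum_le_sum_of_subset_of_nonneg hsub fun y _ _ => hu y
    _ ≤ ∑ i, ∑ y ∈ S i, u y := by
        have h1 : ∀ y, (if y ∈ univ.biUnion S then u y else 0)
            ≤ ∑ i, if y ∈ S i then u y else 0 := by
          intro y
          split_ifs with hy
          · obtain ⟨i, hi, hyi⟩ := Finset.mem_biUnion.mp hy
            refine le_trans ?_ (Finset.single_le_sum (f := fun i => if y ∈ S i then u y else 0)
              (fun i _ => ?_) hi)
            · simp only [hyi, if_true]; exact le_rfl
            · split_ifs
              · exact hu y
              · exact le_rfl
          · apply Finset.sum_nonneg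
            intro i _
            split_ifs
            · exact hu y
            · exact le_rfl
        have h2 := Finset.sum_le_sum (s := univ) fun y _ => h1 y
        rw [Finset.sum_comm] at h2
        simp only [Finset.sum_ite_mem, Finset.univ_inter] at h2
        exact h2
    _ ≤ ∑ i : RIdx L n, b := by
        apply Finset.sum_le_sum
        rintro ⟨m, G, e⟩ _
        simp only [hS]
        split_ifs with hG
        · exact h m (by omega) G hG e
        · simpa using hb
    _ = Fintype.card (RIdx L n) * b := by simp
    _ ≤ _ := mul_le_mul_of_nonneg_right (card_RIdx L n) hb

lemma glauber_one {s : ℕ} (V : Fin s → ℕ) (Pt : ∀ i, Finset (EdgeK (V i))) (β : Fin s → ℝ)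
    {n : ℕ} (hn : 2 ≤ n) (X : Config n) : ∑ Y, glauber V Pt β n X Y = 1 := by
  have := glauber_sum V Pt β n X (fun _ => 1)
  simp only [mul_one] at this
  rw [this]
  have hM : (0 : ℝ) < (n.choose 2 : ℝ) := by exact_mod_cast Nat.choose_pos hn
  simp only [add_sub_cancel, Finset.sum_const, Finset.card_univ, card_edgeK, nsmul_eq_mul, mul_one]
  exact inv_mul_cancel₀ hM.ne'

lemma tail_bound {L s : ℕ} (hs : 0 < s)
    (V : Fin s → ℕ) (Pt : ∀ i, Finset (EdgeK (V i))) (β : Fin s → ℝ)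
    (hVL : ∀ i, V i ≤ L)
    (hG1V : V ⟨0, hs⟩ = 2) (hG1E : (Pt ⟨0, hs⟩).card = 1)
    (hβ : ∀ i : Fin s, 0 < (i : ℕ) → 0 < β i)
    {n : ℕ} (hn : 2 ≤ n) (hnL : L ≤ n) (R : ℝ) (K κ : ℝ) (hK : ((L.choose 2 : ℕ) : ℝ) ≤ K)
    (hκ0 : 0 ≤ κ) (hκ : κ * (4 * K) ≤ 1)
    {m : ℕ} (hm : m ≤ L) (G : Finset (EdgeK m)) (hG : 2 ≤ G.card) (e : EdgeK n)
    (X0 : Config n) (t : ℕ) (ht : t ≤ n ^ 2) (θ : ℝ) :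
    ∑ y ∈ univ.filter (fun y => θ < Zn G e y),
        kernelStep (killed (glauber V Pt β n) (fun y => ¬ goodCfg L n R y)) t X0 y
      ≤ Real.exp (κ * n * (-(θ - phiF Pt β R * R ^ (G.card - 2)) +
          (1 - ((G.card : ℝ) - 1) / (n.choose 2 : ℝ)) ^ t *
            (Zn G e X0 - phiF Pt β R * R ^ (G.card - 2)) + 16 * K ^ 2 * κ)) := by
  have hn0 : 0 < (n : ℝ) := by exact_mod_cast (by omega : 0 < n)
  have hk2 : (2 : ℝ) ≤ (G.card : ℝ) := by exact_mod_cast hG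
  have hkL : G.card ≤ L.choose 2 := (card_G_le G).trans (Nat.choose_le_choose 2 hm)
  have hkK : (G.card : ℝ) ≤ K := le_trans (by exact_mod_cast hkL) hK
  have hkM : (G.card : ℝ) ≤ (n.choose 2 : ℝ) := by
    exact_mod_cast hkL.trans (Nat.choose_le_choose 2 hnL)
  have hMpos : (0 : ℝ) < (n.choose 2 : ℝ) := by linarith
  set a := phiF Pt β R * R ^ (G.card - 2) with ha
  set w := 1 - ((G.card : ℝ) - 1) / (n.choose 2 : ℝ) with hw
  have hw0 : 0 ≤ w := by
    rw [hw, sub_nonneg, div_le_one hMpos]; linarith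
  have hw1 : w ≤ 1 := by
    rw [hw]
    have : 0 ≤ ((G.card : ℝ) - 1) / (n.choose 2 : ℝ) := div_nonneg (by linarith) hMpos.le
    linarith
  have hC : (0 : ℝ) ≤ 16 * (G.card : ℝ) ^ 2 / (n : ℝ) ^ 3 := by positivity
  have hmain := killed_tail (K := glauber V Pt β n) (glauber_nonneg V Pt β n)
    (fun y => ¬ goodCfg L n R y) (fun y => Zn G e y - a) w (16 * (G.card : ℝ) ^ 2 / (n : ℝ) ^ 3)
    (κ * n) hw0 hw1 hC (by positivity) (by
      intro x hx lam h0 h1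
      rw [not_not] at hx
      rw [glauber_sum]
      apply one_step hn hm G hG e x R hx (fun f => sig (dH V Pt β n x f)) (phiF Pt β R)
      · exact sig_nonneg _
      · exact fun f => sig_nonneg _
      · exact fun f => (sig_lt_one _).le
      · intro f
        rw [phiF_eq]
        exact sig_mono (dH_le hs V Pt β hVL hG1V hG1E hβ (by omega) x f R hx)
      · exact h0
      · calc lam * (4 * (G.card : ℝ) / n) ≤ κ * n * (4 * K / n) := by gcongr
          _ = κ * (4 * K) := by field_simp
          _ ≤ 1 := hκ
      · rfl) X0 t (θ - a)
  have hfil : (univ.filter fun y : Config n => θ < Zn G e y)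
      = univ.filter fun y => θ - a < Zn G e y - a := by
    ext y; simp
  rw [hfil]
  refine hmain.trans (Real.exp_le_exp.mpr ?_)
  have h5 : 16 * (G.card : ℝ) ^ 2 / (n : ℝ) ^ 3 * (κ * n) ^ 2 * t ≤ κ * n * (16 * K ^ 2 * κ) := by
    have ht' : (t : ℝ) ≤ (n : ℝ) ^ 2 := by exact_mod_cast ht
    calc 16 * (G.card : ℝ) ^ 2 / (n : ℝ) ^ 3 * (κ * n) ^ 2 * t
        ≤ 16 * K ^ 2 / (n : ℝ) ^ 3 * (κ * n) ^ 2 * (n : ℝ) ^ 2 := by gcongr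
      _ = _ := by field_simp
  linarith

set_option maxHeartbeats 2000000

/-- **Burn-in to the fixed point (Lemma 8).** Let `p*` solve `φ(p)=p` with `φ'(p*)<1` and
let `p̄` be the least solution of `φ(p)=p` greater than `p*` if one exists, and `1`
otherwise. For every `μ > 0` there are `δ, c, α > 0` such that for large `n` and any start
`X(0)` with `p*+μ ≤ r̄(X(0)) ≤ p̄-μ`, after `T = ⌈cn²⌉` Glauber steps,
`r̄(X(T)) ≤ r̄(X(0)) - δ` with probability at least `1 - e^(-αn)`. -/
theorem burn_in_random_walk
    {L s : ℕ} (hL : 2 ≤ L) (hs : 0 < s)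
    (V : Fin s → ℕ) (Pt : ∀ i, Finset (EdgeK (V i))) (β : Fin s → ℝ)
    (hV2 : ∀ i, 2 ≤ V i) (hVL : ∀ i, V i ≤ L)
    (hG1V : V ⟨0, hs⟩ = 2) (hG1E : (Pt ⟨0, hs⟩).card = 1)
    (hβ : ∀ i : Fin s, 0 < (i : ℕ) → 0 < β i)
    (pstar pbar : ℝ) (hmem : pstar ∈ Set.Icc (0:ℝ) 1)
    (hfix : phiF Pt β pstar = pstar) (hderiv : deriv (phiF Pt β) pstar < 1)
    (hpbar : (pstar < pbar ∧ pbar ≤ 1 ∧ phiF Pt β pbar = pbar ∧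
          ∀ q ∈ Set.Ioo pstar pbar, phiF Pt β q ≠ q) ∨
        (pbar = 1 ∧ ∀ q ∈ Set.Ioc pstar (1:ℝ), phiF Pt β q ≠ q)) :
    ∀ μ : ℝ, 0 < μ → ∃ δ c α : ℝ, 0 < δ ∧ 0 < c ∧ 0 < α ∧ ∃ N : ℕ, ∀ n ≥ N,
      ∀ X0 : Config n, pstar + μ ≤ rbar L n X0 → rbar L n X0 ≤ pbar - μ →
        1 - Real.exp (-(α * n)) ≤
          ∑ Y ∈ univ.filter (fun Y : Config n => rbar L n Y ≤ rbar L n X0 - δ),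
            kernelStep (glauber V Pt β n) ⌈c * (n : ℝ) ^ 2⌉₊ X0 Y := by
  intro μ hμ
  -- the gap
  obtain ⟨γ, hγ, hgap⟩ : ∃ γ > 0, ∀ x ∈ Set.Icc (pstar + μ) (pbar - μ / 2),
      phiF Pt β x ≤ x - γ := by
    apply gap_exists (phiF Pt β) (phiF_differentiable Pt β) pstar pbar hfix hderiv
    · rcases hpbar with h | h
      · exact h.2.2.2
      · intro x hx
        exact h.2 x ⟨hx.1, hx.2.le.trans h.1.le⟩
    · linarith
    · linarith
  have hpbar1 : pbar ≤ 1 := by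
    rcases hpbar with h | h
    · exact h.2.1
    · exact h.1.le
  -- constants
  set Jn : ℕ := L.choose 2 + 1 with hJn
  set K : ℝ := (Jn : ℝ) with hK
  have hK1 : (1 : ℝ) ≤ K := by rw [hK, hJn]; push_cast; linarith [(Nat.cast_nonneg (L.choose 2) : (0:ℝ) ≤ _)]
  have hKpos : 0 < K := by linarith
  have hKL : ((L.choose 2 : ℕ) : ℝ) ≤ K := by rw [hK, hJn]; push_cast; linarith
  obtain ⟨ε, hε, hεγ, hεμ⟩ : ∃ ε : ℝ, 0 < ε ∧ ε * (4 * K) ≤ γ ∧ ε ≤ μ / 2 := by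
    refine ⟨min (γ / (4 * K)) (μ / 2), by positivity, ?_, min_le_right _ _⟩
    calc min (γ / (4 * K)) (μ / 2) * (4 * K) ≤ γ / (4 * K) * (4 * K) :=
          mul_le_mul_of_nonneg_right (min_le_left _ _) (by positivity)
      _ = γ := by field_simp
  set η : ℝ := ε / 2 * μ ^ Jn with hη
  have hηpos : 0 < η := by positivity
  obtain ⟨κ, hκ, hκK, hκη⟩ : ∃ κ : ℝ, 0 < κ ∧ κ * (4 * K) ≤ 1 ∧ 16 * K ^ 2 * κ ≤ η / 2 := by
    refine ⟨min (1 / (4 * K)) (η / (32 * K ^ 2)), by positivity, ?_, ?_⟩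
    · calc min (1 / (4 * K)) (η / (32 * K ^ 2)) * (4 * K) ≤ 1 / (4 * K) * (4 * K) :=
          mul_le_mul_of_nonneg_right (min_le_left _ _) (by positivity)
        _ = 1 := by field_simp
    · calc 16 * K ^ 2 * min (1 / (4 * K)) (η / (32 * K ^ 2)) ≤ 16 * K ^ 2 * (η / (32 * K ^ 2)) :=
          mul_le_mul_of_nonneg_left (min_le_right _ _) (by positivity)
        _ = η / 2 := by field_simp; norm_num
  set α : ℝ := κ * η / 4 with hα
  have hαpos : 0 < α := by positivity
  obtain ⟨N, hN⟩ := poly_exp (2 * nPat L) α hαpos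
  refine ⟨ε, 1, α, hε, one_pos, hαpos, max N (max L 2), ?_⟩
  intro n hn X0 hlow hhigh
  have hnN : N ≤ n := (le_max_left _ _).trans hn
  have hnL : L ≤ n := (le_max_left _ _).trans ((le_max_right _ _).trans hn)
  have hn2 : 2 ≤ n := (le_max_right _ _).trans ((le_max_right _ _).trans hn)
  have hn0 : 0 < (n : ℝ) := by exact_mod_cast (by omega : 0 < n)
  have hT : ⌈(1 : ℝ) * (n : ℝ) ^ 2⌉₊ = n ^ 2 := by
    rw [one_mul, ← Nat.cast_pow, Nat.ceil_natCast]
  rw [hT]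
  set r := rbar L n X0 with hr
  have hp0 := hmem.1
  have hμr : μ ≤ r := by linarith
  have hrpos : 0 < r := by linarith
  have hX0 : goodCfg L n r X0 := good_of_rbar_le (by omega) le_rfl
  set R := r + ε with hR
  have hR1 : R ≤ 1 := by linarith
  have hφ : phiF Pt β R ≤ R - γ := hgap R ⟨by linarith, by linarith⟩
  set u := kernelStep (killed (glauber V Pt β n) (fun y => ¬ goodCfg L n R y)) with hu
  have hu0 : ∀ t y, 0 ≤ u t X0 y := fun t y =>
    kernelStep_nonneg (killed_nonneg (glauber_nonneg V Pt β n) _) t X0 y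
  -- facts for each pattern
  have hpat : ∀ m ≤ L, ∀ G : Finset (EdgeK m), 2 ≤ G.card → ∀ e : EdgeK n,
      Zn G e X0 ≤ r ^ (G.card - 1) ∧
      phiF Pt β R * R ^ (G.card - 2) ≤ r ^ (G.card - 1) ∧
      η ≤ R ^ (G.card - 1) - r ^ (G.card - 1) ∧
      η ≤ (r - ε) ^ (G.card - 1) - phiF Pt β R * R ^ (G.card - 2)
        - (r ^ (G.card - 1) - phiF Pt β R * R ^ (G.card - 2)) / 2 := by
    intro m hm G hG e
    have hkL : G.card ≤ L.choose 2 := (card_G_le G).trans (Nat.choose_le_choose 2 hm)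
    have hk0 : 0 < (G.card : ℝ) := by exact_mod_cast (by omega : 0 < G.card)
    refine ⟨?_, ?_⟩
    · unfold Zn
      rw [div_le_iff₀ (by positivity)]
      have := hX0 m hm G hG e
      linarith
    · have h := arith_gap r ε γ μ (phiF Pt β R) K (G.card - 2) Jn hK (by omega) hε hμ hεγ
        (by linarith) hμr hR1 hφ
      have he : G.card - 2 + 1 = G.card - 1 := by omega
      rw [he] at h
      exact h
  have hwpow : ∀ m ≤ L, ∀ G : Finset (EdgeK m), 2 ≤ G.card →
      0 ≤ 1 - ((G.card : ℝ) - 1) / (n.choose 2 : ℝ) ∧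
      1 - ((G.card : ℝ) - 1) / (n.choose 2 : ℝ) ≤ 1 ∧
      (1 - ((G.card : ℝ) - 1) / (n.choose 2 : ℝ)) ^ (n ^ 2) ≤ 1 / 2 := by
    intro m hm G hG
    have hkL : G.card ≤ L.choose 2 := (card_G_le G).trans (Nat.choose_le_choose 2 hm)
    have hk2 : (2 : ℝ) ≤ (G.card : ℝ) := by exact_mod_cast hG
    have hkM : (G.card : ℝ) ≤ (n.choose 2 : ℝ) := by
      exact_mod_cast hkL.trans (Nat.choose_le_choose 2 hnL)
    have hMpos : (0 : ℝ) < (n.choose 2 : ℝ) := by linarith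
    have hx0 : 0 ≤ 1 - ((G.card : ℝ) - 1) / (n.choose 2 : ℝ) := by
      rw [sub_nonneg, div_le_one hMpos]; linarith
    have hxd : 0 ≤ ((G.card : ℝ) - 1) / (n.choose 2 : ℝ) := div_nonneg (by linarith) hMpos.le
    refine ⟨hx0, by linarith, ?_⟩
    have hMn : (n.choose 2 : ℝ) ≤ (n : ℝ) ^ 2 := by exact_mod_cast Nat.choose_le_pow n 2
    have h1 : 1 - ((G.card : ℝ) - 1) / (n.choose 2 : ℝ)
        ≤ Real.exp (-(((G.card : ℝ) - 1) / (n.choose 2 : ℝ))) := by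
      have := Real.add_one_le_exp (-(((G.card : ℝ) - 1) / (n.choose 2 : ℝ)))
      linarith
    calc (1 - ((G.card : ℝ) - 1) / (n.choose 2 : ℝ)) ^ (n ^ 2)
        ≤ (Real.exp (-(((G.card : ℝ) - 1) / (n.choose 2 : ℝ)))) ^ (n ^ 2) :=
          pow_le_pow_left₀ hx0 h1 _
      _ = Real.exp (-((n : ℝ) ^ 2 * (((G.card : ℝ) - 1) / (n.choose 2 : ℝ)))) := by
          rw [← Real.exp_nat_mul]; push_cast; congr 1; ring
      _ ≤ Real.exp (-1) := by
          apply Real.exp_le_exp.mpr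
          apply neg_le_neg
          rw [← mul_div_assoc, le_div_iff₀ hMpos]
          nlinarith
      _ ≤ 1 / 2 := by
          rw [Real.exp_neg, one_div]
          apply inv_anti₀ (by norm_num)
          have := Real.add_one_le_exp (1 : ℝ)
          linarith
  set b : ℝ := Real.exp (-(2 * α * n)) with hb
  have hexp : ∀ x : ℝ, x ≤ -η → Real.exp (κ * n * (x + 16 * K ^ 2 * κ)) ≤ b := by
    intro x hx
    apply Real.exp_le_exp.mpr
    have : x + 16 * K ^ 2 * κ ≤ -(η / 2) := by linarith
    have h2 := mul_le_mul_of_nonneg_left this (by positivity : 0 ≤ κ * n)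
    refine h2.trans (le_of_eq ?_)
    rw [hα]; ring
  have hB : ∀ t < n ^ 2, ∑ y ∈ univ.filter (fun y => ¬ goodCfg L n R y), u t X0 y
      ≤ nPat L * (n : ℝ) ^ 2 * b := by
    intro t ht
    apply union_good (by omega) R _ (hu0 t) b (Real.exp_pos _).le
    intro m hm G hG e
    refine (tail_bound hs V Pt β hVL hG1V hG1E hβ hn2 hnL R K κ hKL hκ.le hκK hm G hG e X0 t ht.le
      (R ^ (G.card - 1))).trans (hexp _ ?_)
    obtain ⟨h1, h2, h3, -⟩ := hpat m hm G hG e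
    obtain ⟨w0, w1, -⟩ := hwpow m hm G hG
    have hwt := pow_le_one₀ (n := t) w0 w1
    have hwt0 := pow_nonneg w0 t
    nlinarith
  have hA : ∑ y ∈ univ.filter (fun y => ¬ rbar L n y ≤ r - ε), u (n ^ 2) X0 y
      ≤ nPat L * (n : ℝ) ^ 2 * b := by
    have h1 : ∑ y ∈ univ.filter (fun y => ¬ goodCfg L n (r - ε) y), u (n ^ 2) X0 y
        ≤ nPat L * (n : ℝ) ^ 2 * b := by
      apply union_good (by omega) (r - ε) _ (hu0 (n ^ 2)) b (Real.exp_pos _).le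
      intro m hm G hG e
      refine (tail_bound hs V Pt β hVL hG1V hG1E hβ hn2 hnL R K κ hKL hκ.le hκK hm G hG e X0 (n ^ 2)
        le_rfl ((r - ε) ^ (G.card - 1))).trans (hexp _ ?_)
      obtain ⟨h1, h2, -, h4⟩ := hpat m hm G hG e
      obtain ⟨w0, -, w2⟩ := hwpow m hm G hG
      have hwt0 := pow_nonneg w0 (n ^ 2)
      have h5 := mul_le_mul_of_nonneg_left (sub_le_sub_right h1 (phiF Pt β R * R ^ (G.card - 2))) hwt0
      have h6 := mul_le_mul_of_nonneg_right w2 (sub_nonneg.mpr h2)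
      linarith
    refine le_trans (Finset.sum_le_sum_of_subset_of_nonneg ?_ fun y _ _ => hu0 _ y) h1
    intro y hy
    have hy' := (Finset.mem_filter.mp hy).2
    exact Finset.mem_filter.mpr ⟨Finset.mem_univ _, fun hg =>
      hy' (rbar_le_of_good (by linarith) hg)⟩
  have hfin := final_prob (glauber_nonneg V Pt β n) (glauber_one V Pt β hn2)
    (fun y => ¬ goodCfg L n R y) (fun y => rbar L n y ≤ r - ε) (n ^ 2) X0 (nPat L * (n : ℝ) ^ 2 * b)
    (fun t ht => by convert hB t ht) (by convert hA)
  refine le_trans ?_ (hfin.trans (le_of_eq (by congr)))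
  have h1 := hN n hnN
  have h2 : (((n ^ 2 : ℕ) : ℝ) + 1) * (nPat L * (n : ℝ) ^ 2 * b)
      ≤ 2 * nPat L * (n : ℝ) ^ 4 * b := by
    have h3 : (1 : ℝ) ≤ (n : ℝ) ^ 2 := by
      have : (2 : ℝ) ≤ n := by exact_mod_cast hn2
      nlinarith
    have h4 : 0 ≤ nPat L * (n : ℝ) ^ 2 * b := by positivity
    push_cast
    calc ((n : ℝ) ^ 2 + 1) * (nPat L * (n : ℝ) ^ 2 * b)
        ≤ (2 * (n : ℝ) ^ 2) * (nPat L * (n : ℝ) ^ 2 * b) :=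
          mul_le_mul_of_nonneg_right (by linarith) h4
      _ = _ := by ring
  linarith
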